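/- arXiv:2109.03168 — 5 statements merged into one kernel-verified Lean document; each statement's English description precedes it below -/
import Mathlib

section
/- The Construction-1 packet-level code C_{(a,a(r+1)−1,r)} over F_Q is an (a, a(r+1)−1, r) locally recoverable streaming code of rate r/(r+1); i.e., it is simultaneously an (a, a(r+1)−1) SC and a (1,r) SC, and its rate r/(r+1) matches the upper bound min{(a(r+1)−a)/(a(r+1)), r/(r+1)} = r/(r+1), so it is rate-optimal. -/
/-- A packet-level code with a causal systematic encoder: the parity part of the
coded packet at time `t` is a fixed function of the message packets at times `≤ t`. -/
structure PacketCode (F : Type) (k n : ℕ) where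
  parity : (ℤ → Fin k → F) → ℤ → Fin (n - k) → F
  causal : ∀ (m m' : ℤ → Fin k → F) (t : ℤ),
    (∀ t' ≤ t, m t' = m' t') → parity m t = parity m' t

/-- A valid message stream vanishes at negative times. -/
def IsMsgStream {F : Type} [Zero F] {k : ℕ} (m : ℤ → Fin k → F) : Prop :=
  ∀ t < 0, m t = 0

/-- `(a, τ)` streaming-code property. -/
def IsSC {F : Type} [Zero F] {k n : ℕ} (C : PacketCode F k n) (a τ : ℕ) : Prop :=
  ∀ m m' : ℤ → Fin k → F, IsMsgStream m → IsMsgStream m' →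
    ∀ t : ℤ, 0 ≤ t →
      ∀ E : Finset ℤ, (∀ x ∈ E, t ≤ x ∧ x ≤ t + τ) → t ∈ E → E.card ≤ a →
        (∀ t' < t, m t' = m' t') →
        (∀ t' : ℤ, t ≤ t' → t' ≤ t + τ → t' ∉ E →
          m t' = m' t' ∧ C.parity m t' = C.parity m' t') →
        m t = m' t

/-- `(a, τ, r)` locally recoverable streaming code. -/
def IsLRSC {F : Type} [Zero F] {k n : ℕ} (C : PacketCode F k n) (a τ r : ℕ) : Prop :=
  IsSC C a τ ∧ IsSC C 1 r
/-- Every square submatrix of `M` is nonsingular. -/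
def AllSquareSubmatricesNonsingular {K : Type} [Field K] {r a : ℕ}
    (M : Matrix (Fin r) (Fin a) K) : Prop :=
  ∀ (z : ℕ) (ρ : Fin z → Fin r) (σ : Fin z → Fin a),
    Function.Injective ρ → Function.Injective σ → (M.submatrix ρ σ).det ≠ 0

/-- `Γ = C ⬝ diag(α₀,…,α_{a-1})`, i.e. the `j`-th column of `C` scaled by `α j`. -/
def gammaMatrix {K : Type} [Field K] {r a : ℕ} (C : Matrix (Fin r) (Fin a) K)
    (α : Fin a → K) : Matrix (Fin r) (Fin a) K :=
  Matrix.of fun i j => C i j * α j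
/-- Construction 1: the packet-level code with `k = r`, `n = r+1` and parity
`p₀(t) = Σ_{j=0}^{a-1} \hat m(t - r - j(r+1)) · Γ_j`, where
`\hat m(s) = (m_0(s), m_1(s+1), …, m_{r-1}(s+r-1))`. -/
def construction1 {K : Type} [Field K] {r a : ℕ} (Γ : Matrix (Fin r) (Fin a) K) :
    PacketCode K r (r + 1) where
  parity := fun m t _ => ∑ j : Fin a, ∑ i : Fin r,
    Γ i j * m (t - (r : ℤ) - ((j : ℕ) : ℤ) * ((r : ℤ) + 1) + ((i : ℕ) : ℤ)) i
  causal := by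
    intro m m' t h
    funext s
    refine Finset.sum_congr rfl fun j _ => Finset.sum_congr rfl fun i _ => ?_
    have h1 : (0 : ℤ) ≤ ((j : ℕ) : ℤ) * ((r : ℤ) + 1) := by positivity
    have h2 : ((i : ℕ) : ℤ) < (r : ℤ) := by exact_mod_cast i.isLt
    rw [h (t - (r : ℤ) - ((j : ℕ) : ℤ) * ((r : ℤ) + 1) + ((i : ℕ) : ℤ)) (by linarith)]

/-- entry -/
def lrG {K : Type} [Field K] {r : ℕ} (C : Fin r → ℕ → K) (α : ℕ → K) (p : ℕ × Fin r) (c : ℕ) : K :=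
  if p.1 ≤ c then C p.2 (c - p.1) * α (c - p.1) else 0

/-- kernel-trivial iff det, one way: card equal, det of some arrangement nonzero -/
lemma lr_det_ne_of_ker {K : Type} [Field K] {I : Type} [Fintype I] [DecidableEq I]
    (M : Matrix I I K) (h : ∀ x : I → K, (∀ j, ∑ i, x i * M i j = 0) → x = 0) : M.det ≠ 0 := by
  intro h0
  obtain ⟨v, hv, hv'⟩ := Matrix.exists_vecMul_eq_zero_iff.2 h0
  exact hv (h v fun j => congrFun hv' j)

lemma lr_ker_of_det_ne {K : Type} [Field K] {I : Type} [Fintype I] [DecidableEq I]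
    (M : Matrix I I K) (h : M.det ≠ 0) (x : I → K) (hx : ∀ j, ∑ i, x i * M i j = 0) : x = 0 := by
  by_contra hne
  exact h (Matrix.exists_vecMul_eq_zero_iff.1 ⟨x, hne, funext fun j => hx j⟩)

lemma lr_det_mem {K : Type} [Field K] {I : Type} [Fintype I] [DecidableEq I]
    (M : Matrix I I K) (F : Subfield K) (h : ∀ i j, M i j ∈ F) : M.det ∈ F := by
  rw [Matrix.det_apply]
  refine sum_mem fun σ _ => ?_
  rw [Units.smul_def]
  exact zsmul_mem (prod_mem fun i _ => h _ _) _

/-- All rows in a single block. -/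
lemma lr_base {K : Type} [Field K] {r a : ℕ} (C : Fin r → ℕ → K)
    (hC : ∀ (z : ℕ) (ρ : Fin z → Fin r) (σ : Fin z → ℕ), Function.Injective ρ →
      Function.Injective σ → (∀ i, σ i < a) → (Matrix.of fun i j => C (ρ i) (σ j)).det ≠ 0)
    (β : ℕ) (R : Finset (ℕ × Fin r)) (T : Finset ℕ)
    (hR : ∀ p ∈ R, p.1 = β) (hT : ∀ c ∈ T, β ≤ c ∧ c < a) (hcard : T.card = R.card)
    (x : ℕ × Fin r → K) (hx : ∀ c ∈ T, ∑ p ∈ R, x p * C p.2 (c - β) = 0) :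
    ∀ p ∈ R, x p = 0 := by
  let eR : Fin R.card ≃ R := R.equivFin.symm
  let eT : Fin R.card ≃ T := (finCongr hcard.symm).trans T.equivFin.symm
  have hd := hC R.card (fun i => (eR i).1.2) (fun j => (eT j).1 - β)
    (by
      intro i j hij
      apply eR.injective
      apply Subtype.ext
      exact Prod.ext ((hR _ (eR i).2).trans (hR _ (eR j).2).symm) hij)
    (by
      intro i j hij
      apply eT.injective
      apply Subtype.ext
      have h1 := (hT _ (eT i).2).1
      have h2 := (hT _ (eT j).2).1
      simp only at hij
      omega)
    (by
      intro i
      have h1 := (hT _ (eT i).2)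
      omega)
  have := lr_ker_of_det_ne _ hd (fun i => x (eR i).1) (by
    intro j
    have h := hx _ (eT j).2
    rw [← Finset.sum_coe_sort, ← eR.sum_comp] at h
    exact h)
  intro p hp
  have h := congrFun this (eR.symm ⟨p, hp⟩)
  simpa using h

lemma lr_core {K : Type} [Field K] {r a : ℕ} (C : Fin r → ℕ → K) (α : ℕ → K)
    (Fs : ℕ → Subfield K) (hmono : Monotone Fs)
    (hCF : ∀ i j, C i j ∈ Fs 0)
    (hC : ∀ (z : ℕ) (ρ : Fin z → Fin r) (σ : Fin z → ℕ), Function.Injective ρ →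
      Function.Injective σ → (∀ i, σ i < a) → (Matrix.of fun i j => C (ρ i) (σ j)).det ≠ 0)
    (hα1 : ∀ j, j ≤ 1 → α j = 1)
    (hα2 : ∀ j < a, 2 ≤ j → α j ∈ Fs j ∧ α j ∉ Fs (j - 1)) (N : ℕ) :
    ∀ (β : ℕ) (R : Finset (ℕ × Fin r)) (U S : Finset ℕ),
      U.card + (a - β) ≤ N → Disjoint U S →
      (∀ c ∈ U, β ≤ c ∧ c < a) → (∀ c ∈ S, β ≤ c ∧ c < a) → (∀ p ∈ R, β ≤ p.1) →
      (∀ B, β ≤ B → (U.filter (· ≤ B)).card + S.card ≤ (R.filter (·.1 ≤ B)).card) →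
      U.card + S.card = R.card →
      ∀ x : ℕ × Fin r → K,
        (∀ c ∈ U, ∑ p ∈ R, x p * lrG C α p c = 0) →
        (∀ c ∈ S, ∑ p ∈ R, x p * (if p.1 = β then C p.2 (c - β) else 0) = 0) →
        ∀ p ∈ R, x p = 0 := by
  have hαF : ∀ j < a, α j ∈ Fs j := by
    intro j hj
    rcases Nat.lt_or_ge j 2 with h | h
    · rw [hα1 j (by omega)]; exact one_mem _
    · exact (hα2 j hj h).1
  have hα0 : ∀ j < a, α j ≠ 0 := by
    intro j hj
    rcases Nat.lt_or_ge j 2 with h | h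
    · rw [hα1 j (by omega)]; exact one_ne_zero
    · intro h0
      apply (hα2 j hj h).2
      rw [h0]; exact zero_mem _
  induction N using Nat.strong_induction_on with
  | _ N ih =>
  intro β R U S hN hdis hU hS hR hpre hcard x hxU hxS
  by_cases hA : ∀ p ∈ R, p.1 = β
  · -- all rows in a single block
    refine lr_base (a := a) C hC β R (U ∪ S) hA ?_ ?_ x ?_
    · intro c hc
      rcases Finset.mem_union.1 hc with h | h
      · exact hU c h
      · exact hS c h
    · rw [Finset.card_union_of_disjoint hdis, hcard]
    · intro c hc
      rcases Finset.mem_union.1 hc with h | h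
      · have h1 := hxU c h
        have h2 := hU c h
        have h3 : ∑ p ∈ R, x p * lrG C α p c = (∑ p ∈ R, x p * C p.2 (c - β)) * α (c - β) := by
          rw [Finset.sum_mul]
          refine Finset.sum_congr rfl fun p hp => ?_
          rw [lrG, hA p hp, if_pos h2.1, mul_assoc]
        rw [h3] at h1
        exact (mul_eq_zero.1 h1).resolve_right (hα0 _ (by omega))
      · rw [← hxS c h]
        refine Finset.sum_congr rfl fun p hp => ?_
        rw [if_pos (hA p hp)]
  have hRβ : (R.filter (·.1 ≤ β)).card < R.card := by
    apply Finset.card_lt_card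
    rw [Finset.filter_ssubset]
    push Not at hA
    obtain ⟨p, hp, hne⟩ := hA
    exact ⟨p, hp, fun h => hne (le_antisymm h (hR p hp))⟩
  have hUne : U.Nonempty := by
    rw [Finset.nonempty_iff_ne_empty]
    rintro rfl
    have := hpre β le_rfl
    simp at this hcard
    omega
  obtain ⟨c, hcU, hcmax⟩ : ∃ c ∈ U, ∀ c' ∈ U, c' ≤ c :=
    ⟨U.max' hUne, U.max'_mem hUne, fun c' h => U.le_max' c' h⟩
  by_cases hT : ∃ B, β ≤ B ∧ B < c ∧
      (U.filter (· ≤ B)).card + S.card = (R.filter (·.1 ≤ B)).card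
  · obtain ⟨B, hB1, hB2, hB3⟩ := hT
    have hca := hU c hcU
    have hlt : (U.filter (· ≤ B)).card < U.card := by
      apply Finset.card_lt_card
      rw [Finset.filter_ssubset]
      exact ⟨c, hcU, by omega⟩
    have hUs := Finset.card_filter_add_card_filter_not (s := U) (· ≤ B)
    have hRs := Finset.card_filter_add_card_filter_not (s := R) (·.1 ≤ B)
    have part1 : ∀ p ∈ R.filter (·.1 ≤ B), x p = 0 := by
      refine ih ((U.filter (· ≤ B)).card + (a - β)) (by omega) β _ (U.filter (· ≤ B)) S le_rfl
        (Finset.disjoint_of_subset_left (Finset.filter_subset _ _) hdis) ?_ hS ?_ ?_ hB3 x ?_ ?_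
      · intro c hc; exact hU c (Finset.mem_filter.1 hc).1
      · intro p hp; exact hR p (Finset.mem_filter.1 hp).1
      · intro B' hB'
        rw [Finset.filter_filter, Finset.filter_filter]
        rcases le_total B B' with h | h
        · rw [Finset.filter_congr (q := (· ≤ B)) (fun y _ => by omega),
            Finset.filter_congr (p := fun p : ℕ × Fin r => _) (q := (·.1 ≤ B)) (fun y _ => by omega)]
          exact hB3.le
        · rw [Finset.filter_congr (q := (· ≤ B')) (fun y _ => by omega),
            Finset.filter_congr (p := fun p : ℕ × Fin r => _) (q := (·.1 ≤ B')) (fun y _ => by omega)]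
          exact hpre B' hB'
      · intro c hc
        rw [Finset.mem_filter] at hc
        rw [← hxU c hc.1]
        apply Finset.sum_subset (Finset.filter_subset _ _)
        intro p hp hp'
        rw [lrG, if_neg, mul_zero]
        intro h
        exact hp' (Finset.mem_filter.2 ⟨hp, by omega⟩)
      · intro c hc
        refine Eq.trans ?_ (hxS c hc)
        apply Finset.sum_subset (Finset.filter_subset _ _)
        intro p hp hp'
        rw [if_neg, mul_zero]
        intro h
        exact hp' (Finset.mem_filter.2 ⟨hp, by omega⟩)
    have part2 : ∀ p ∈ R.filter (¬ ·.1 ≤ B), x p = 0 := by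
      refine ih ((U.filter (¬ · ≤ B)).card + (a - (B + 1))) (by omega) (B + 1) _
        (U.filter (¬ · ≤ B)) ∅ le_rfl (Finset.disjoint_empty_right _) ?_ (by simp) ?_ ?_ ?_ x ?_
        (by simp)
      · intro c hc
        rw [Finset.mem_filter] at hc
        have := hU c hc.1
        omega
      · intro p hp
        rw [Finset.mem_filter] at hp
        omega
      · intro B' hB'
        have h1 := hpre B' (by omega)
        have h2 := Finset.card_filter_add_card_filter_not (s := U.filter (· ≤ B')) (· ≤ B)
        have h3 := Finset.card_filter_add_card_filter_not (s := R.filter (·.1 ≤ B')) (·.1 ≤ B)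
        rw [Finset.filter_filter, Finset.filter_congr (q := (· ≤ B)) (fun y _ => by omega)] at h2
        rw [Finset.filter_filter, Finset.filter_congr (p := fun p : ℕ × Fin r => _)
          (q := (·.1 ≤ B)) (fun y _ => by omega)] at h3
        rw [Finset.filter_comm (fun y => ¬ y ≤ B) (fun y => y ≤ B') U,
          Finset.filter_comm (fun y : ℕ × Fin r => ¬ y.1 ≤ B) (fun y => y.1 ≤ B') R,
          Finset.card_empty]
        omega
      · rw [Finset.card_empty]; omega
      · intro c hc
        rw [Finset.mem_filter] at hc
        rw [← hxU c hc.1]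
        apply Finset.sum_subset (Finset.filter_subset _ _)
        intro p hp hp'
        rw [part1 p, zero_mul]
        rw [Finset.mem_filter] at hp' ⊢
        exact ⟨hp, by tauto⟩
    intro p hp
    by_cases h : p.1 ≤ B
    · exact part1 p (Finset.mem_filter.2 ⟨hp, h⟩)
    · exact part2 p (Finset.mem_filter.2 ⟨hp, h⟩)
  -- no tight prefix
  have hT' : ∀ B, β ≤ B → B < c →
      (U.filter (· ≤ B)).card + S.card + 1 ≤ (R.filter (·.1 ≤ B)).card := by
    intro B h1 h2
    have h3 := hpre B h1
    by_contra h4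
    exact hT ⟨B, h1, h2, by omega⟩
  have hca := hU c hcU
  have hcS : c ∉ S := Finset.disjoint_left.1 hdis hcU
  have hd2 : 2 ≤ c - β := by
    by_contra hlt
    rcases Nat.lt_or_ge β c with h | h
    · have h1 := hT' β le_rfl h
      have h2 : (U.erase c) ⊆ U.filter (· ≤ β) := by
        intro y hy
        rw [Finset.mem_erase] at hy
        rw [Finset.mem_filter]
        have := hcmax y hy.2
        exact ⟨hy.2, by omega⟩
      have h3 := Finset.card_le_card h2
      rw [Finset.card_erase_of_mem hcU] at h3
      omega
    · have h1 := hpre β le_rfl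
      have h2 : U.filter (· ≤ β) = U := by
        rw [Finset.filter_eq_self]
        intro y hy
        have := hcmax y hy
        omega
      rw [h2] at h1
      omega
  have hUpos : 0 < U.card := Finset.card_pos.2 hUne
  -- the replaced system has trivial kernel
  have hrep := ih ((U.erase c).card + (a - β))
    (by rw [Finset.card_erase_of_mem hcU]; omega) β R (U.erase c) (insert c S) le_rfl
    (by
      rw [Finset.disjoint_insert_right]
      exact ⟨Finset.notMem_erase _ _, Finset.disjoint_of_subset_left (Finset.erase_subset _ _) hdis⟩)
    (fun y hy => hU y (Finset.mem_of_mem_erase hy))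
    (by
      intro y hy
      rcases Finset.mem_insert.1 hy with rfl | h
      · exact hca
      · exact hS y h) hR
    (by
      intro B hB
      rw [Finset.card_insert_of_notMem hcS]
      rcases Nat.lt_or_ge B c with h | h
      · have h1 := hT' B hB h
        have h2 : ((U.erase c).filter (· ≤ B)).card ≤ (U.filter (· ≤ B)).card :=
          Finset.card_le_card (Finset.filter_subset_filter _ (Finset.erase_subset _ _))
        omega
      · have h1 := hpre B hB
        have h2 : (U.filter (· ≤ B)) = U := by
          rw [Finset.filter_eq_self]
          intro y hy
          have := hcmax y hy
          omega
        have h3 := Finset.card_le_card (Finset.filter_subset (· ≤ B) (U.erase c))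
        rw [Finset.card_erase_of_mem hcU] at h3
        rw [h2] at h1
        omega)
    (by
      rw [Finset.card_insert_of_notMem hcS, Finset.card_erase_of_mem hcU]
      omega)
  -- matrices
  have hcT : (U ∪ S).card = R.card := by rw [Finset.card_union_of_disjoint hdis, hcard]
  let e : R ≃ (U ∪ S : Finset ℕ) := Finset.equivOfCardEq hcT.symm
  let ent : ℕ × Fin r → ℕ → K := fun p c' =>
    if c' ∈ U then lrG C α p c' else (if p.1 = β then C p.2 (c' - β) else 0)
  let M : Matrix R R K := Matrix.of fun p j => ent p.1 (e j).1
  let j0 : R := e.symm ⟨c, Finset.mem_union_left _ hcU⟩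
  let v : R → K := fun p => if p.1.1 = β then C p.1.2 (c - β) else 0
  let w : R → K := fun p => if p.1.1 = β then 0 else lrG C α p.1 c
  have hej0 : (e j0).1 = c := by simp [j0]
  have hejne : ∀ j, j ≠ j0 → (e j).1 ≠ c := by
    intro j hj h
    apply hj
    apply e.injective
    apply Subtype.ext
    rw [h, hej0]
  have hext : ∀ (P : R → K) , (∑ p ∈ R.attach, P p) = ∑ p, P p := fun P => rfl
  have hMcol : M = M.updateCol j0 (α (c - β) • v + w) := by
    ext p j
    by_cases hj : j = j0
    · subst hj
      rw [Matrix.updateCol_self]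
      simp only [M, Matrix.of_apply, ent, hej0, if_pos hcU, Pi.add_apply, Pi.smul_apply, v, w,
        smul_eq_mul]
      split_ifs with h
      · rw [lrG, h, if_pos hca.1]; ring
      · simp
    · rw [Matrix.updateCol_ne hj]
  have hPne : (M.updateCol j0 v).det ≠ 0 := by
    apply lr_det_ne_of_ker
    intro y hy
    let y' : ℕ × Fin r → K := fun p => if h : p ∈ R then y ⟨p, h⟩ else 0
    have hy' : ∀ p : R, y' p.1 = y p := fun p => by simp [y']
    have key := hrep y' (by
      intro d hd
      have hd' := Finset.mem_of_mem_erase hd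
      have hdc := Finset.ne_of_mem_erase hd
      let j : R := e.symm ⟨d, Finset.mem_union_left _ hd'⟩
      have hj : (e j).1 = d := by simp [j]
      have := hy j
      refine Eq.trans ?_ this
      rw [← Finset.sum_coe_sort]
      refine Finset.sum_congr rfl fun p _ => ?_
      rw [hy', Matrix.updateCol_ne (by rintro h; apply hdc; rw [← hj, h, hej0])]
      simp only [M, Matrix.of_apply, ent, hj, if_pos hd']) (by
      intro d hd
      by_cases hdc : d = c
      · have := hy j0
        refine Eq.trans ?_ this
        rw [← Finset.sum_coe_sort]
        refine Finset.sum_congr rfl fun p _ => ?_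
        rw [hy', Matrix.updateCol_self, hdc]
      · have hd' : d ∈ S := (Finset.mem_insert.1 hd).resolve_left hdc
        let j : R := e.symm ⟨d, Finset.mem_union_right _ hd'⟩
        have hj : (e j).1 = d := by simp [j]
        have := hy j
        refine Eq.trans ?_ this
        rw [← Finset.sum_coe_sort]
        refine Finset.sum_congr rfl fun p _ => ?_
        rw [hy', Matrix.updateCol_ne (by rintro h; apply hdc; rw [← hj, h, hej0])]
        simp only [M, Matrix.of_apply, ent, hj, if_neg (Finset.disjoint_right.1 hdis hd')])
    funext p
    rw [← hy', key p.1 p.2, Pi.zero_apply]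
  have hCF' : ∀ n i j, C i j ∈ Fs n := fun n i j => hmono (Nat.zero_le n) (hCF i j)
  have hG : ∀ (p : ℕ × Fin r) (d : ℕ), d < a → d - p.1 ≤ c - β - 1 → lrG C α p d ∈ Fs (c - β - 1) := by
    intro p d hd hle
    rw [lrG]
    split_ifs
    · exact mul_mem (hCF' _ _ _) (hmono hle (hαF _ (by omega)))
    · exact zero_mem _
  have hMmem : ∀ (u : R → K), (∀ p, u p ∈ Fs (c - β - 1)) → (M.updateCol j0 u).det ∈ Fs (c - β - 1) := by
    intro u hu
    apply lr_det_mem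
    intro p j
    by_cases hj : j = j0
    · subst hj
      rw [Matrix.updateCol_self]; exact hu p
    · rw [Matrix.updateCol_ne hj]
      have hne := hejne j hj
      simp only [M, Matrix.of_apply, ent]
      split_ifs with h1 h2
      · have := hcmax _ h1
        have h3 := hR p.1 p.2
        have h4 := hU _ h1
        exact hG _ _ h4.2 (by omega)
      · exact hCF' _ _ _
      · exact zero_mem _
  have hP := hMmem v (by
    intro p
    simp only [v]
    split_ifs
    · exact hCF' _ _ _
    · exact zero_mem _)
  have hQ := hMmem w (by
    intro p
    simp only [w]
    split_ifs with h
    · exact zero_mem _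
    · have h3 := hR p.1 p.2
      exact hG _ _ hca.2 (by omega))
  have hdet : M.det ≠ 0 := by
    intro h0
    rw [hMcol, Matrix.det_updateCol_add, Matrix.det_updateCol_smul] at h0
    apply (hα2 (c - β) (by omega) hd2).2
    have : α (c - β) = -(M.updateCol j0 w).det / (M.updateCol j0 v).det := by
      rw [eq_div_iff hPne]
      linear_combination h0
    rw [this]
    exact div_mem (neg_mem hQ) hP
  have hfin := lr_ker_of_det_ne M hdet (fun p => x p.1) (by
    intro j
    rcases Finset.mem_union.1 (e j).2 with h | h
    · refine Eq.trans ?_ (hxU _ h)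
      rw [← Finset.sum_coe_sort R]
      refine Finset.sum_congr rfl fun p _ => ?_
      simp only [M, Matrix.of_apply, ent, if_pos h]
    · refine Eq.trans ?_ (hxS _ h)
      rw [← Finset.sum_coe_sort R]
      refine Finset.sum_congr rfl fun p _ => ?_
      simp only [M, Matrix.of_apply, ent, if_neg (Finset.disjoint_right.1 hdis h)])
  intro p hp
  exact congrFun hfin ⟨p, hp⟩

lemma lr_parity_sub {K : Type} [Field K] {r a : ℕ} (Γ : Matrix (Fin r) (Fin a) K)
    (m m' : ℤ → Fin r → K) (s : ℤ)
    (h : (construction1 Γ).parity m s = (construction1 Γ).parity m' s) :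
    ∑ j : Fin a, ∑ k : Fin r,
      Γ k j * (m (s - (r : ℤ) - ((j : ℕ) : ℤ) * ((r : ℤ) + 1) + ((k : ℕ) : ℤ)) k
        - m' (s - (r : ℤ) - ((j : ℕ) : ℤ) * ((r : ℤ) + 1) + ((k : ℕ) : ℤ)) k) = 0 := by
  have h1 := congrFun h ⟨0, by omega⟩
  simp only [construction1] at h1
  simp only [mul_sub, Finset.sum_sub_distrib]
  rw [h1, sub_self]

lemma lr_local {K : Type} [Field K] {r a : ℕ} (ha : 0 < a) (Γ : Matrix (Fin r) (Fin a) K)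
    (hΓ : ∀ i, Γ i ⟨0, ha⟩ ≠ 0) : IsSC (construction1 Γ) 1 r := by
  intro m m' _ _ t ht E hE htE hcard hpast hwin
  have hEt : E = {t} := by
    symm
    apply Finset.eq_of_subset_of_card_le
    · simpa using htE
    · simpa using hcard
  subst hEt
  have hz : ∀ s, s ≤ t + r → s ≠ t → ∀ k, m s k - m' s k = 0 := by
    intro s hs hne k
    rcases lt_or_ge s t with h | h
    · rw [hpast s h, sub_self]
    · rw [(hwin s h hs (by simpa using hne)).1, sub_self]
  funext i
  have hi : ((i : ℕ) : ℤ) < r := by exact_mod_cast i.2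
  have hp := lr_parity_sub Γ m m' (t + r - (i : ℕ))
    (hwin (t + r - (i : ℕ)) (by omega) (by omega) (by simp; omega)).2
  rw [Finset.sum_eq_single (⟨0, ha⟩ : Fin a), Finset.sum_eq_single i] at hp
  · have e : t + (r : ℤ) - (i : ℕ) - (r : ℤ) - (((⟨0, ha⟩ : Fin a) : ℕ) : ℤ) * ((r : ℤ) + 1)
        + ((i : ℕ) : ℤ) = t := by simp; ring
    rw [e] at hp
    exact sub_eq_zero.1 ((mul_eq_zero.1 hp).resolve_left (hΓ i))
  · intro k _ hk
    have hk' : (k : ℕ) ≠ i := fun h => hk (Fin.ext h)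
    have := k.2
    rw [hz, mul_zero]
    · simp; omega
    · simp; omega
  · simp
  · intro j _ hj
    have hj' : (j : ℕ) ≠ 0 := fun h => hj (Fin.ext h)
    have hj1 : (1 : ℤ) ≤ (j : ℕ) := by omega
    have : (r : ℤ) + 1 ≤ ((j : ℕ) : ℤ) * ((r : ℤ) + 1) := by nlinarith
    apply Finset.sum_eq_zero
    intro k _
    have := k.2
    rw [hz, mul_zero] <;> omega
  · simp

lemma lr_global {K : Type} [Field K] {r a : ℕ} (ha : 2 ≤ a) (Γ : Matrix (Fin r) (Fin a) K)
    (C : Fin r → ℕ → K) (α : ℕ → K) (hΓ : ∀ k (j : Fin a), Γ k j = C k j * α j)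
    (Fs : ℕ → Subfield K) (hmono : Monotone Fs)
    (hCF : ∀ i j, C i j ∈ Fs 0)
    (hC : ∀ (z : ℕ) (ρ : Fin z → Fin r) (σ : Fin z → ℕ), Function.Injective ρ →
      Function.Injective σ → (∀ i, σ i < a) → (Matrix.of fun i j => C (ρ i) (σ j)).det ≠ 0)
    (hα1 : ∀ j, j ≤ 1 → α j = 1)
    (hα2 : ∀ j < a, 2 ≤ j → α j ∈ Fs j ∧ α j ∉ Fs (j - 1)) :
    IsSC (construction1 Γ) a (a * (r + 1) - 1) := by
  intro m m' _ _ t ht E hE htE hcard hpast hwin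
  funext i
  have hi : ((i : ℕ) : ℤ) < r := by exact_mod_cast i.2
  have hτ : ((a * (r + 1) - 1 : ℕ) : ℤ) = (a : ℤ) * (r + 1) - 1 := by
    have : 1 ≤ a * (r + 1) := Nat.mul_pos (by omega) (by omega)
    push_cast [Nat.cast_sub this]
    ring
  rw [hτ] at hE hwin
  let pos : ℕ → ℕ → ℤ := fun b k => t + (b : ℤ) * ((r : ℤ) + 1) + k - (i : ℕ)
  have hposlt : ∀ b k, b < a → k ≤ r → pos b k ≤ t + ((a : ℤ) * (r + 1) - 1) := by
    intro b k hb hk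
    have hb' : (b : ℤ) + 1 ≤ a := by exact_mod_cast hb
    have hk' : (k : ℤ) ≤ r := by exact_mod_cast hk
    have : ((b : ℤ) + 1) * (r + 1) ≤ a * (r + 1) := by
      apply mul_le_mul_of_nonneg_right hb'; positivity
    have hi0 : (0 : ℤ) ≤ (i : ℕ) := by positivity
    simp only [pos]
    linarith
  have hposinj : ∀ b k b' k', k ≤ r → k' ≤ r → pos b k = pos b' k' → b = b' ∧ k = k' := by
    intro b k b' k' hk hk' h
    simp only [pos] at h
    have h1 : (b * (r + 1) + k : ℕ) = b' * (r + 1) + k' := by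
      zify; linarith
    have h2 : b = b' := by
      have := congrArg (· / (r + 1)) h1
      rwa [mul_comm, Nat.mul_add_div (by omega), mul_comm b', Nat.mul_add_div (by omega),
        Nat.div_eq_of_lt (by omega), Nat.div_eq_of_lt (by omega)] at this
    subst h2
    exact ⟨rfl, by omega⟩
  have hz : ∀ b (k : Fin r), b < a → pos b k ∉ E → m (pos b k) k - m' (pos b k) k = 0 := by
    intro b k hb hne
    rcases lt_or_ge (pos b k) t with h | h
    · rw [hpast _ h, sub_self]
    · rw [(hwin _ h (hposlt b k hb (by omega)) hne).1, sub_self]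
  let Rf : ℕ → Finset (ℕ × Fin r) := fun B =>
    (Finset.range (B + 1) ×ˢ Finset.univ).filter (fun p => pos p.1 p.2 ∈ E)
  let Pf : ℕ → Finset ℕ := fun B => (Finset.range (B + 1)).filter (fun b => pos b r ∈ E)
  have hRfmono : ∀ B B', B ≤ B' → (Rf B).card ≤ (Rf B').card := by
    intro B B' h
    apply Finset.card_le_card
    intro p
    simp only [Rf, Finset.mem_filter, Finset.mem_product, Finset.mem_range, Finset.mem_univ]
    intro hp
    exact ⟨⟨by omega, trivial⟩, hp.2⟩
  have hPfmono : ∀ B B', B ≤ B' → (Pf B).card ≤ (Pf B').card := by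
    intro B B' h
    apply Finset.card_le_card
    intro p
    simp only [Pf, Finset.mem_filter, Finset.mem_range]
    intro hp
    exact ⟨by omega, hp.2⟩
  have htot : (Rf (a - 1)).card + (Pf (a - 1)).card ≤ a := by
    refine le_trans ?_ hcard
    have h1 : ((Rf (a - 1)).image (fun p => pos p.1 p.2)).card = (Rf (a - 1)).card := by
      apply Finset.card_image_of_injective
      intro p p' h
      have := hposinj _ _ _ _ p.2.2.le p'.2.2.le h
      exact Prod.ext this.1 (Fin.ext this.2)
    have h2 : ((Pf (a - 1)).image (fun b => pos b r)).card = (Pf (a - 1)).card := by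
      apply Finset.card_image_of_injective
      intro p p' h
      exact (hposinj _ _ _ _ le_rfl le_rfl h).1
    rw [← h1, ← h2, ← Finset.card_union_of_disjoint]
    · apply Finset.card_le_card
      intro y hy
      simp only [Finset.mem_union, Finset.mem_image, Rf, Pf, Finset.mem_filter] at hy
      rcases hy with ⟨p, hp, rfl⟩ | ⟨p, hp, rfl⟩
      · exact hp.2
      · exact hp.2
    · rw [Finset.disjoint_left]
      intro y hy hy'
      rw [Finset.mem_image] at hy hy'
      obtain ⟨p, _, rfl⟩ := hy
      obtain ⟨b, _, h⟩ := hy'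
      have := (hposinj _ _ _ _ le_rfl p.2.2.le h).2
      have := p.2.2
      omega
  have hex : ∃ B, (Rf B).card + (Pf B).card ≤ B + 1 := ⟨a - 1, by omega⟩
  obtain ⟨B, hB, hBmin⟩ : ∃ B, (Rf B).card + (Pf B).card ≤ B + 1 ∧
      ∀ B' < B, B' + 2 ≤ (Rf B').card + (Pf B').card := by
    classical
    refine ⟨Nat.find hex, Nat.find_spec hex, fun B' h => ?_⟩
    have := Nat.find_min hex h
    omega
  have hBa : B < a := by
    by_contra h
    have := hBmin (a - 1) (by omega)
    omega
  have h0mem : ∀ B, (0, i) ∈ Rf B := by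
    intro B
    simp [Rf, pos, htE]
  have hBeq : (Rf B).card + (Pf B).card = B + 1 := by
    rcases Nat.eq_zero_or_pos B with h | h
    · have := Finset.card_pos.2 ⟨_, h0mem B⟩
      omega
    · have h1 := hBmin (B - 1) (by omega)
      have h2 := hRfmono (B - 1) B (by omega)
      have h3 := hPfmono (B - 1) B (by omega)
      omega
  let Uf : ℕ → Finset ℕ := fun B => (Finset.range (B + 1)).filter (fun b => ¬ pos b r ∈ E)
  have hUf : ∀ B, (Pf B).card + (Uf B).card = B + 1 := by
    intro B
    have := Finset.card_filter_add_card_filter_not (s := Finset.range (B + 1)) (fun b => pos b r ∈ E)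
    rwa [Finset.card_range] at this
  let x : ℕ × Fin r → K := fun p => m (pos p.1 p.2) p.2 - m' (pos p.1 p.2) p.2
  have hx := lr_core (a := a) C α Fs hmono hCF hC hα1 hα2 _ 0 (Rf B) (Uf B) ∅ le_rfl
    (Finset.disjoint_empty_right _)
    (by
      intro c hc
      simp only [Uf, Finset.mem_filter, Finset.mem_range] at hc
      omega)
    (by simp) (by simp)
    (by
      intro B' _
      rw [Finset.card_empty, add_zero]
      rcases Nat.lt_or_ge B' B with h | h
      · have h1 : (Uf B).filter (· ≤ B') = Uf B' := by
          ext y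
          simp only [Uf, Finset.mem_filter, Finset.mem_range]
          constructor
          · rintro ⟨⟨_, h2⟩, h3⟩; exact ⟨by omega, h2⟩
          · rintro ⟨h3, h2⟩; exact ⟨⟨by omega, h2⟩, by omega⟩
        have h2 : (Rf B).filter (·.1 ≤ B') = Rf B' := by
          ext y
          simp only [Rf, Finset.mem_filter, Finset.mem_range, Finset.mem_product, Finset.mem_univ,
            and_true]
          constructor
          · rintro ⟨⟨_, h2⟩, h3⟩; exact ⟨by omega, h2⟩
          · rintro ⟨h3, h2⟩; exact ⟨⟨by omega, h2⟩, by omega⟩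
        rw [h1, h2]
        have := hUf B'
        have := hBmin B' h
        omega
      · have h2 : (Rf B).filter (·.1 ≤ B') = Rf B := by
          rw [Finset.filter_eq_self]
          intro y
          simp only [Rf, Finset.mem_filter, Finset.mem_range, Finset.mem_product, Finset.mem_univ,
            and_true]
          intro hy
          omega
        rw [h2]
        have h1 := Finset.card_le_card (Finset.filter_subset (· ≤ B') (Uf B))
        have := hUf B
        omega)
    (by
      have := hUf B
      rw [Finset.card_empty]
      omega)
    x
    (by
      intro c hc
      simp only [Uf, Finset.mem_filter, Finset.mem_range] at hc
      have hcr : (0 : ℤ) ≤ (c : ℤ) * ((r : ℤ) + 1) := by positivity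
      have hpar := lr_parity_sub Γ m m' (pos c r)
        (hwin _ (by simp only [pos]; omega) (hposlt c r (by omega) le_rfl) hc.2).2
      -- rewrite the parity sum
      have hR : ∑ p ∈ Rf B, x p * lrG C α p c
          = ∑ b ∈ Finset.range (B + 1), ∑ k : Fin r, x (b, k) * lrG C α (b, k) c := by
        rw [← Finset.sum_product' (f := fun b k => x (b, k) * lrG C α (b, k) c)]
        apply Finset.sum_subset (Finset.filter_subset _ _)
        intro p hp hp'
        simp only [Finset.mem_product, Finset.mem_range] at hp
        have : pos p.1 p.2 ∉ E := fun h => hp' (by simp [Rf, h]; omega)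
        simp only [x]
        rw [hz p.1 p.2 (by omega) this, zero_mul]
      have hR2 : ∑ b ∈ Finset.range (B + 1), ∑ k : Fin r, x (b, k) * lrG C α (b, k) c
          = ∑ b ∈ Finset.range (c + 1), ∑ k : Fin r, x (b, k) * lrG C α (b, k) c := by
        symm
        apply Finset.sum_subset
        · intro y; simp only [Finset.mem_range]; omega
        · intro b _ hb
          rw [Finset.mem_range] at hb
          apply Finset.sum_eq_zero
          intro k _
          rw [lrG, if_neg (by simp only; omega), mul_zero]
      let f : ℕ → K := fun j => ∑ k : Fin r, (C k j * α j) *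
        (m (pos c r - (r : ℤ) - (j : ℤ) * ((r : ℤ) + 1) + ((k : ℕ) : ℤ)) k
        - m' (pos c r - (r : ℤ) - (j : ℤ) * ((r : ℤ) + 1) + ((k : ℕ) : ℤ)) k)
      have hpar2 : ∑ j ∈ Finset.range a, f j = 0 := by
        rw [← Fin.sum_univ_eq_sum_range, ← hpar]
        refine Finset.sum_congr rfl fun j _ => Finset.sum_congr rfl fun k _ => ?_
        rw [hΓ]
      rw [hR, hR2, ← Finset.sum_flip]
      refine Eq.trans ?_ hpar2
      have hsub : Finset.range (c + 1) ⊆ Finset.range a := by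
        intro y; simp only [Finset.mem_range]; omega
      rw [← Finset.sum_subset hsub]
      · refine Finset.sum_congr rfl fun j hj => Finset.sum_congr rfl fun k _ => ?_
        rw [Finset.mem_range] at hj
        have e1 : pos c r - (r : ℤ) - (j : ℤ) * ((r : ℤ) + 1) + ((k : ℕ) : ℤ) = pos (c - j) k := by
          simp only [pos]
          rw [Nat.cast_sub (by omega)]
          ring
        rw [e1, lrG, if_pos (by simp only; omega)]
        simp only [x]
        rw [show c - (c - j) = j by omega]
        ring
      · intro j hj hj'
        rw [Finset.mem_range] at hj hj'
        apply Finset.sum_eq_zero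
        intro k _
        have hk := k.2
        have hcj : ((c : ℤ) + 1) * (r + 1) ≤ j * (r + 1) := by
          apply mul_le_mul_of_nonneg_right (by omega); positivity
        rw [hpast, sub_self, mul_zero]
        simp only [pos]
        have hk' : ((k : ℕ) : ℤ) < r := by exact_mod_cast hk
        have hi0 : (0 : ℤ) ≤ (i : ℕ) := by positivity
        linarith)
    (by simp) (0, i) (h0mem B)
  have e0 : pos 0 i = t := by simp [pos]
  simp only [x, e0] at hx
  exact sub_eq_zero.1 hx

/-- The Construction-1 code `C_{(a,a(r+1)-1,r)}` is a rate-optimal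
`(a, a(r+1)-1, r)` locally recoverable streaming code: it is simultaneously an
`(a, a(r+1)-1)` SC and a `(1,r)` SC, and its rate `r/(r+1)` matches the upper
bound `min{(a(r+1)-a)/(a(r+1)), r/(r+1)}`. -/
theorem construction1_isLRSC
    (K : Type) [Field K] [Fintype K] (q a r : ℕ)
    (hq : IsPrimePow q) (ha : 2 ≤ a) (hr : 1 ≤ r)
    (Fsub : ℕ → Subfield K) (hmono : Monotone Fsub)
    (hcard : ∀ j ≤ a - 1, Nat.card (Fsub j) = q ^ 2 ^ (j - 1))
    (htop : Fsub (a - 1) = ⊤)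
    (C : Matrix (Fin r) (Fin a) K) (hC : ∀ i j, C i j ∈ Fsub 0)
    (hCns : AllSquareSubmatricesNonsingular C)
    (α : Fin a → K)
    (hα01 : ∀ j : Fin a, (j : ℕ) ≤ 1 → α j = 1)
    (hαmem : ∀ j : Fin a, 2 ≤ (j : ℕ) → α j ∈ Fsub (j : ℕ) ∧ α j ∉ Fsub ((j : ℕ) - 1))
    :
    IsLRSC (construction1 (gammaMatrix C α)) a (a * (r + 1) - 1) r ∧
    (r : ℚ) / ((r : ℚ) + 1) =
      min (((a : ℚ) * ((r : ℚ) + 1) - (a : ℚ)) / ((a : ℚ) * ((r : ℚ) + 1)))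
        ((r : ℚ) / ((r : ℚ) + 1)) := by
  have ha0 : 0 < a := by omega
  refine ⟨⟨?_, ?_⟩, ?_⟩
  · refine lr_global ha _ (fun i j => if h : j < a then C i ⟨j, h⟩ else 0)
      (fun j => if h : j < a then α ⟨j, h⟩ else 1) ?_ Fsub hmono ?_ ?_ ?_ ?_
    · intro k j
      simp [gammaMatrix]
    · intro i j
      split_ifs
      · exact hC _ _
      · exact zero_mem _
    · intro z ρ σ hρ hσ hlt
      have h := hCns z ρ (fun i => ⟨σ i, hlt i⟩) hρ
        (fun i j hij => hσ (by simpa using hij))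
      convert h using 2
      ext i j
      simp [hlt]
    · intro j hj
      rw [dif_pos (by omega)]
      exact hα01 _ hj
    · intro j hj h2
      simp only [dif_pos hj]
      exact hαmem ⟨j, hj⟩ h2
  · refine lr_local ha0 _ ?_
    intro i
    have h := hCns 1 (fun _ => i) (fun _ => ⟨0, ha0⟩) (Function.injective_of_subsingleton _)
      (Function.injective_of_subsingleton _)
    rw [Matrix.det_fin_one] at h
    simp only [gammaMatrix, Matrix.of_apply, hα01 ⟨0, ha0⟩ (by simp), mul_one]
    exact h
  · have h1 : (a : ℚ) ≠ 0 := by positivity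
    have h2 : (r : ℚ) + 1 ≠ 0 := by positivity
    have h3 : ((a : ℚ) * ((r : ℚ) + 1) - (a : ℚ)) / ((a : ℚ) * ((r : ℚ) + 1))
        = (r : ℚ) / ((r : ℚ) + 1) := by
      field_simp
      ring
    rw [h3, min_self]
end

section
/- Consider the parity check matrix H = [P^T | −I_a] ∈ F_Q^{a×a(r+1)} of C*_{a,r}, with columns h_0, h_1, …, h_{a(r+1)−1}. Let E ⊆ {0,…,a(r+1)−1} be any erasure set with |E| = a and E ∩ {0,…,r−1} nonempty. Then for every i ∈ E ∩ {0,…,r−1}, the column h_i does not lie in the linear span of {h_j : j ∈ E, i+1 ≤ j ≤ a(r+1)−1}. -/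
/-- The parity-check matrix `H = [Pᵀ | -I_a]` of the scalar code `C*_{a,r}`:
columns `0,…,ar-1` come in `a` blocks of width `r`, the `(i,j)`-th `1×r` block of
`Pᵀ` being `Γ_{i-j}ᵀ` for `j ≤ i` and `0` otherwise; the last `a` columns form
`-I_a`. -/
def starH {K : Type} [Field K] {r a : ℕ} (Γ : Matrix (Fin r) (Fin a) K) :
    Matrix (Fin a) (Fin (a * (r + 1))) K :=
  Matrix.of fun i c =>
    if hc : (c : ℕ) < a * r then
      if hji : (c : ℕ) / r ≤ (i : ℕ) then
        Γ ⟨(c : ℕ) % r, Nat.mod_lt _ (Nat.pos_of_ne_zero fun h => by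
              subst h; simp at hc)⟩
          ⟨(i : ℕ) - (c : ℕ) / r, lt_of_le_of_lt (Nat.sub_le _ _) i.isLt⟩
      else 0
    else if (c : ℕ) - a * r = (i : ℕ) then -1 else 0

/-- The scalar code `C*_{a,r} = {x : H x = 0}`, an `[a(r+1), ar]` linear code. -/
def starCode {K : Type} [Field K] {r a : ℕ} (Γ : Matrix (Fin r) (Fin a) K) :
    Set (Fin (a * (r + 1)) → K) :=
  {x | Matrix.mulVec (starH Γ) x = 0}

theorem star_retract {K : Type} [Field K] (L : Subfield K) :
    ∃ g : K →+ K, (∀ l ∈ L, ∀ x, g (l * x) = l * g x) ∧ (∀ x, g x ∈ L) ∧ g 1 = 1 := by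
  obtain ⟨f, hf⟩ := LinearMap.exists_leftInverse_of_injective (Algebra.linearMap L K)
    (LinearMap.ker_eq_bot.2 (algebraMap L K).injective)
  refine ⟨(algebraMap L K : L →+* K).toAddMonoidHom.comp f.toAddMonoidHom, ?_, ?_, ?_⟩
  · intro l hl x
    have := f.map_smul (⟨l, hl⟩ : L) x
    have h2 : (⟨l, hl⟩ : L) • x = l * x := rfl
    rw [h2] at this
    simp only [AddMonoidHom.comp_apply]
    change ((f (l * x) : L) : K) = l * ((f x : L) : K)
    rw [this]
    rfl
  · intro x
    exact (f x).2
  · have := LinearMap.congr_fun hf 1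
    simp at this
    simp [this]

/-- Vectors killed by the rows in `S`. -/
def starKer {K β : Type} [Field K] [Fintype β] {a : ℕ} (B : Fin a → β → K) (S : Finset (Fin a)) :
    Submodule K (β → K) where
  carrier := {y | ∀ s ∈ S, ∑ b, B s b * y b = 0}
  zero_mem' := by intro s _; simp
  add_mem' := by
    intro x y hx hy s hs
    have h1 := hx s hs
    have h2 := hy s hs
    simp only [Pi.add_apply, mul_add, Finset.sum_add_distrib]
    rw [h1, h2, add_zero]
  smul_mem' := by
    intro c x hx s hs
    have h1 := hx s hs
    simp only [Pi.smul_apply, smul_eq_mul, mul_left_comm _ c, ← Finset.mul_sum]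
    rw [h1, mul_zero]

theorem star_core {K κ β : Type} [Field K] [Fintype κ] [Fintype β] {a : ℕ}
    (F : ℕ → Subfield K) (hF : Monotone F) (C : κ → Fin a → K) (hC : ∀ k s, C k s ∈ F 0)
    (B : Fin a → β → K) (α : Fin a → K)
    (hα1 : ∀ s : Fin a, (s : ℕ) ≤ 1 → α s = 1)
    (hα : ∀ s : Fin a, 2 ≤ (s : ℕ) → α s ∉ F ((s : ℕ) - 1))
    (hα' : ∀ s : Fin a, α s ∈ F (s : ℕ))
    (hB : ∀ (s : Fin a) (b : β), B s b ∈ F ((s : ℕ) - 1))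
    (hB0 : ∀ s : Fin a, (s : ℕ) = 0 → ∀ b, B s b = 0)
    (hinj : ∀ U : Finset (Fin a), Fintype.card κ ≤ U.card → ∀ x : κ → K,
      (∀ u ∈ U, ∑ k, C k u * x k = 0) → x = 0)
    (S : Finset (Fin a)) : ∀ U : Finset (Fin a), Disjoint U S →
      Fintype.card κ + Fintype.card β ≤ U.card + S.card + Module.finrank K (starKer B S) →
      ∀ (x : κ → K) (y : β → K), (∀ u ∈ U, ∑ k, C k u * x k = 0) →
        (∀ s ∈ S, α s * ∑ k, C k s * x k + ∑ b, B s b * y b = 0) → x = 0 := by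
  induction S using Finset.induction_on_max with
  | empty =>
    intro U _ hcard x y hx _
    refine hinj U ?_ x hx
    have : Module.finrank K (starKer B ∅) ≤ Fintype.card β := by
      have := Submodule.finrank_le (starKer B ∅)
      simpa using this
    simp only [Finset.card_empty] at hcard
    omega
  | insert s S hmax ih =>
    intro U hdisj hcard x y hx hy
    have hsS : s ∉ S := fun h => lt_irrefl _ (hmax s h)
    rw [Finset.disjoint_insert_right] at hdisj
    rw [Finset.card_insert_of_notMem hsS] at hcard
    have hle : starKer B (insert s S) ≤ starKer B S :=
      fun z hz t ht => hz t (Finset.mem_insert_of_mem ht)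
    by_cases hker : starKer B S ≤ starKer B (insert s S)
    · -- the row `s` of `B` is determined by the rows in `S`
      have heq : starKer B (insert s S) = starKer B S := le_antisymm hle hker
      have hrow : ∀ z : β → K, (∀ t ∈ S, ∑ b, B t b * z b = 0) → ∑ b, B s b * z b = 0 :=
        fun z hz => hker hz s (Finset.mem_insert_self _ _)
      have hP : ∀ (x : κ → K) (y : β → K), (∀ u ∈ U, ∑ k, C k u * x k = 0) →
          (∑ k, C k s * x k = 0) →
          (∀ t ∈ S, α t * ∑ k, C k t * x k + ∑ b, B t b * y b = 0) → x = 0 := by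
        intro x y h1 h2 h3
        refine ih (insert s U) ?_ ?_ x y ?_ h3
        · rw [Finset.disjoint_insert_left]
          exact ⟨hsS, hdisj.2⟩
        · rw [Finset.card_insert_of_notMem hdisj.1, ← heq]
          omega
        · intro u hu
          rcases Finset.mem_insert.1 hu with rfl | hu
          · exact h2
          · exact h1 u hu
      have hyS : ∀ t ∈ S, α t * ∑ k, C k t * x k + ∑ b, B t b * y b = 0 :=
        fun t ht => hy t (Finset.mem_insert_of_mem ht)
      have hys := hy s (Finset.mem_insert_self _ _)
      by_cases hc : ∑ k, C k s * x k = 0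
      · exact hP x y hx hc hyS
      exfalso
      rcases le_or_gt (s : ℕ) 1 with hs1 | hs2
      · have hBy : ∑ b, B s b * y b = 0 := by
          apply hrow
          intro t ht
          have h0 : (t : ℕ) = 0 := by
            have := Fin.lt_def.1 (hmax t ht)
            omega
          simp [hB0 t h0]
        rw [hBy, hα1 s hs1, one_mul, add_zero] at hys
        exact hc hys
      · obtain ⟨g, hgl, hgm, hg1⟩ := star_retract (F ((s : ℕ) - 1))
        set c := ∑ k, C k s * x k with hcdef
        let x' : κ → K := fun k => c⁻¹ * x k
        let y' : β → K := fun b => c⁻¹ * y b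
        have hCx' : ∀ t, ∑ k, C k t * x' k = c⁻¹ * ∑ k, C k t * x k := by
          intro t; simp only [x', Finset.mul_sum, mul_left_comm]
        have hBy' : ∀ t, ∑ b, B t b * y' b = c⁻¹ * ∑ b, B t b * y b := by
          intro t; simp only [y', Finset.mul_sum, mul_left_comm]
        have hCm : ∀ k t, C k t ∈ F ((s : ℕ) - 1) := fun k t => hF (Nat.zero_le _) (hC k t)
        have hgC : ∀ t, ∑ k, C k t * g (x' k) = g (∑ k, C k t * x' k) := by
          intro t
          rw [map_sum]
          exact Finset.sum_congr rfl fun k _ => (hgl _ (hCm k t) _).symm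
        have hgB : ∀ t ≤ s, ∑ b, B t b * g (y' b) = g (∑ b, B t b * y' b) := by
          intro t hts
          rw [map_sum]
          refine Finset.sum_congr rfl fun b _ => (hgl _ (hF ?_ (hB t b)) _).symm
          have := Fin.le_def.1 hts
          omega
        have hx'1 : ∑ k, C k s * x' k = 1 := by
          rw [hCx', ← hcdef, inv_mul_cancel₀ hc]
        have hx'U : ∀ u ∈ U, ∑ k, C k u * x' k = 0 := by
          intro u hu; rw [hCx', hx u hu, mul_zero]
        have hy'S : ∀ t ∈ S, α t * ∑ k, C k t * x' k + ∑ b, B t b * y' b = 0 := by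
          intro t ht
          rw [hCx', hBy', mul_left_comm, ← mul_add, hyS t ht, mul_zero]
        have hgS : ∀ t ∈ S, α t * ∑ k, C k t * g (x' k) + ∑ b, B t b * g (y' b) = 0 := by
          intro t ht
          have hlt := Fin.lt_def.1 (hmax t ht)
          rw [hgC, hgB t (hmax t ht).le, ← hgl, ← map_add, hy'S t ht, map_zero]
          exact hF (by omega) (hα' t)
        have hsubC : ∀ t, ∑ k, C k t * (x' k - g (x' k)) =
            ∑ k, C k t * x' k - ∑ k, C k t * g (x' k) := by
          intro t; simp only [mul_sub, Finset.sum_sub_distrib]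
        have hsubB : ∀ t, ∑ b, B t b * (y' b - g (y' b)) =
            ∑ b, B t b * y' b - ∑ b, B t b * g (y' b) := by
          intro t; simp only [mul_sub, Finset.sum_sub_distrib]
        have hz : (fun k => x' k - g (x' k)) = 0 := by
          refine hP _ (fun b => y' b - g (y' b)) ?_ ?_ ?_
          · intro u hu
            rw [hsubC, hgC, hx'U u hu, map_zero, sub_zero]
          · rw [hsubC, hgC, hx'1, hg1, sub_self]
          · intro t ht
            rw [hsubC, hsubB]
            linear_combination hy'S t ht - hgS t ht
        have hzk : ∀ k, x' k - g (x' k) = 0 := fun k => congr_fun hz k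
        have hBs : ∑ b, B s b * (y' b - g (y' b)) = 0 := by
          apply hrow
          intro t ht
          have h0 : ∑ k, C k t * (x' k - g (x' k)) = 0 := by simp [hzk]
          rw [hsubC] at h0
          rw [hsubB]
          linear_combination hy'S t ht - hgS t ht - α t * h0
        have hfin : α s + ∑ b, B s b * y' b = 0 := by
          rw [hBy']
          have := hys
          field_simp
          linear_combination this
        apply hα s hs2
        have hαe : α s = - ∑ b, B s b * g (y' b) := by
          rw [hsubB] at hBs
          linear_combination hfin - hBs
        rw [hαe]
        exact neg_mem (sum_mem fun b _ => mul_mem (hB s b) (hgm _))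
    · have hlt : starKer B (insert s S) < starKer B S := lt_of_le_not_ge hle hker
      have := Submodule.finrank_lt_finrank_of_lt hlt
      exact ih U hdisj.2 (by omega) x y hx fun t ht => hy t (Finset.mem_insert_of_mem ht)

theorem starCode_aux_inj {K κ : Type} [Field K] [Fintype κ] {r a : ℕ} (C : Matrix (Fin r) (Fin a) K)
    (hC : AllSquareSubmatricesNonsingular C) (e : κ → Fin r) (he : Function.Injective e)
    (U : Finset (Fin a)) (hU : Fintype.card κ ≤ U.card) (x : κ → K)
    (hx : ∀ u ∈ U, ∑ k, C (e k) u * x k = 0) : x = 0 := by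
  let ε := Fintype.equivFin κ
  let σ : Fin (Fintype.card κ) → Fin a := fun i => U.orderEmbOfFin rfl (Fin.castLE hU i)
  have hσ : Function.Injective σ := fun i j h =>
    Fin.castLE_injective hU ((U.orderEmbOfFin rfl).injective h)
  have hdet := hC _ (fun i => e (ε.symm i)) σ (he.comp ε.symm.injective) hσ
  have h0 := Matrix.eq_zero_of_vecMul_eq_zero hdet (v := fun i => x (ε.symm i)) (by
    funext j
    have := hx (σ j) (Finset.orderEmbOfFin_mem U rfl _)
    rw [← ε.symm.sum_comp] at this
    simpa [Matrix.vecMul, dotProduct, mul_comm] using this)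
  funext k
  have := congr_fun h0 (ε k)
  simpa using this

/-- For the parity-check matrix `H = [Pᵀ | -I_a]` of `C*_{a,r}` and any erasure
set `E` of size `a` meeting `{0,…,r-1}`, for every `i ∈ E ∩ {0,…,r-1}` the
column `h_i` is not in the span of the columns `{h_j : j ∈ E, j > i}`. -/
theorem starH_column_independence
    (K : Type) [Field K] [Fintype K] (q a r : ℕ)
    (hq : IsPrimePow q) (ha : 2 ≤ a) (hr : 1 ≤ r)
    (Fsub : ℕ → Subfield K) (hmono : Monotone Fsub)
    (hcard : ∀ j ≤ a - 1, Nat.card (Fsub j) = q ^ 2 ^ (j - 1))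
    (htop : Fsub (a - 1) = ⊤)
    (C : Matrix (Fin r) (Fin a) K) (hC : ∀ i j, C i j ∈ Fsub 0)
    (hCns : AllSquareSubmatricesNonsingular C)
    (α : Fin a → K)
    (hα01 : ∀ j : Fin a, (j : ℕ) ≤ 1 → α j = 1)
    (hαmem : ∀ j : Fin a, 2 ≤ (j : ℕ) → α j ∈ Fsub (j : ℕ) ∧ α j ∉ Fsub ((j : ℕ) - 1))
    (E : Finset (Fin (a * (r + 1)))) (hEcard : E.card = a)
    (hEmeets : ∃ i ∈ E, (i : ℕ) < r) :
    ∀ i ∈ E, (i : ℕ) < r →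
      (fun s => starH (gammaMatrix C α) s i) ∉
        Submodule.span K ((fun j => fun s => starH (gammaMatrix C α) s j) ''
          {j : Fin (a * (r + 1)) | j ∈ E ∧ i < j}) := by
  intro i hiE hir hmem
  classical
  set H := starH (gammaMatrix C α) with hH
  have hset : {j : Fin (a * (r + 1)) | j ∈ E ∧ i < j} = ((E.filter (fun j => i < j)) : Set _) := by
    ext j; simp
  rw [hset, Submodule.mem_span_image_finset_iff_exists_fun] at hmem
  obtain ⟨f0, hf0⟩ := hmem
  let f : Fin (a * (r + 1)) → K := fun c => if h : c ∈ E.filter (fun j => i < j) then f0 ⟨c, h⟩ else 0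
  have hf : ∑ c ∈ E.filter (fun j => i < j), f c • (fun s => H s c) = fun s => H s i := by
    rw [← hf0, ← Finset.sum_coe_sort]
    refine Finset.sum_congr rfl fun c _ => ?_
    simp only [f, c.2, dif_pos]
  let w : Fin (a * (r + 1)) → K := fun c => if c = i then -1 else if i < c then f c else 0
  have hw : ∀ s, ∑ c ∈ E, H s c * w c = 0 := by
    intro s
    have h1 := congr_fun hf s
    simp only [Finset.sum_apply, Pi.smul_apply, smul_eq_mul] at h1
    rw [← Finset.add_sum_erase E _ hiE]
    have h2 : ∑ c ∈ E.erase i, H s c * w c = ∑ c ∈ E.filter (fun j => i < j), f c * H s c := by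
      symm
      rw [Finset.sum_filter, ← Finset.add_sum_erase E _ hiE]
      simp only [lt_irrefl, if_false, zero_add]
      refine Finset.sum_congr rfl fun c hc => ?_
      have := Finset.ne_of_mem_erase hc
      simp only [w, this, if_false]
      split_ifs <;> ring
    rw [h2, h1]
    simp [w]
  have har : a * (r + 1) = a * r + a := by ring
  have hra : r ≤ a * r := Nat.le_mul_of_pos_left r (by omega)
  let E0 := E.filter (fun c : Fin (a * (r + 1)) => (c : ℕ) < r)
  let E1 := E.filter (fun c : Fin (a * (r + 1)) => r ≤ (c : ℕ) ∧ (c : ℕ) < a * r)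
  let E2 := E.filter (fun c : Fin (a * (r + 1)) => a * r ≤ (c : ℕ))
  have hE : E0 ∪ (E1 ∪ E2) = E := by
    ext c
    simp only [E0, E1, E2, Finset.mem_union, Finset.mem_filter]
    constructor
    · rintro (h | h | h) <;> exact h.1
    · intro h
      rcases lt_or_ge (c : ℕ) r with h1 | h1
      · exact Or.inl ⟨h, h1⟩
      · rcases lt_or_ge (c : ℕ) (a * r) with h2 | h2
        · exact Or.inr (Or.inl ⟨h, h1, h2⟩)
        · exact Or.inr (Or.inr ⟨h, h2⟩)
  have hd12 : Disjoint E1 E2 := by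
    rw [Finset.disjoint_left]
    intro c h1 h2
    simp only [E1, E2, Finset.mem_filter] at h1 h2
    omega
  have hd0 : Disjoint E0 (E1 ∪ E2) := by
    rw [Finset.disjoint_left]
    intro c h1 h2
    simp only [E0, E1, E2, Finset.mem_filter, Finset.mem_union] at h1 h2
    omega
  let u : Fin a → Fin (a * (r + 1)) := fun s => ⟨a * r + s, by have := s.2; omega⟩
  let S : Finset (Fin a) := Finset.univ.filter (fun s => u s ∉ E)
  have hScard : E2.card + S.card = a := by
    have h1 : E2.card = (Finset.univ.filter (fun s => u s ∈ E)).card := by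
      symm
      refine Finset.card_bij (fun s _ => u s) ?_ ?_ ?_
      · intro s hs
        simp only [Finset.mem_filter, Finset.mem_univ, true_and] at hs
        simp only [E2, Finset.mem_filter]
        exact ⟨hs, by simp [u]⟩
      · intro s _ t _ hst
        simp only [u, Fin.mk.injEq] at hst
        exact Fin.ext (by omega)
      · intro c hc
        simp only [E2, Finset.mem_filter] at hc
        have hc2 := c.2
        have huc : u ⟨(c : ℕ) - a * r, by omega⟩ = c := Fin.ext (by simp [u]; omega)
        refine ⟨⟨(c : ℕ) - a * r, by omega⟩, ?_, huc⟩
        simp only [Finset.mem_filter, Finset.mem_univ, true_and, huc]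
        exact hc.1
    rw [h1]
    have := Finset.card_filter_add_card_filter_not (s := (Finset.univ : Finset (Fin a)))
      (fun s => u s ∈ E)
    simpa [S] using this
  have hEc : E0.card + E1.card + E2.card = a := by
    have h1 := Finset.card_union_of_disjoint hd0
    rw [hE, Finset.card_union_of_disjoint hd12, hEcard] at h1
    omega
  have hαm : ∀ s : Fin a, α s ∈ Fsub (s : ℕ) := by
    intro s
    rcases le_or_gt (s : ℕ) 1 with h | h
    · rw [hα01 s h]; exact one_mem _
    · exact (hαmem s h).1
  let e : E0 → Fin r := fun c => ⟨(c : Fin (a * (r + 1))), (Finset.mem_filter.1 c.2).2⟩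
  have he : Function.Injective e := by
    intro c d h
    simp only [e, Fin.mk.injEq] at h
    exact Subtype.ext (Fin.ext h)
  have hH0 : ∀ (s : Fin a) (c : E0), H s c = α s * C (e c) s := by
    intro s c
    have hc := (Finset.mem_filter.1 c.2).2
    have h1 : ((c : Fin (a * (r + 1))) : ℕ) < a * r := by omega
    have h2 : ((c : Fin (a * (r + 1))) : ℕ) / r = 0 := Nat.div_eq_of_lt hc
    have h3 : ((c : Fin (a * (r + 1))) : ℕ) % r = c := Nat.mod_eq_of_lt hc
    simp only [hH, starH, gammaMatrix, Matrix.of_apply, h1, h2, h3, dif_pos, Nat.zero_le,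
      Nat.sub_zero, e]
    ring
  have hH1 : ∀ (s : Fin a) (c : E1), H s c ∈ Fsub ((s : ℕ) - 1) ∧ ((s : ℕ) = 0 → H s c = 0) := by
    intro s c
    have hc := (Finset.mem_filter.1 c.2).2
    have h2 : 1 ≤ ((c : Fin (a * (r + 1))) : ℕ) / r := (Nat.one_le_div_iff (by omega)).2 hc.1
    simp only [hH, starH, gammaMatrix, Matrix.of_apply, hc.2, dif_pos]
    split_ifs with h
    · refine ⟨mul_mem (hmono (Nat.zero_le _) (hC _ _)) (hmono ?_ (hαm _)), fun h0 => by omega⟩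
      simp only
      omega
    · exact ⟨zero_mem _, fun _ => rfl⟩
  have hH2 : ∀ s ∈ S, ∀ c ∈ E2, H s c = 0 := by
    intro s hs c hc
    simp only [S, E2, Finset.mem_filter, Finset.mem_univ, true_and] at hs hc
    have h1 : ¬ ((c : ℕ) < a * r) := by omega
    have h2 : ¬ ((c : ℕ) - a * r = (s : ℕ)) := by
      intro h
      apply hs
      have : u s = c := Fin.ext (by simp [u]; omega)
      rw [this]
      exact hc.1
    simp only [hH, starH, Matrix.of_apply, h1, h2, dif_neg, if_neg, not_false_eq_true]
  have hx := star_core (κ := E0) (β := E1) Fsub hmono (fun c s => C (e c) s) (fun c s => hC _ _)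
    (fun s c => H s c) α hα01 (fun s hs => (hαmem s hs).2) hαm (fun (s : Fin a) c => (hH1 s c).1)
    (fun s hs c => (hH1 s c).2 hs) (fun U hU x hx => starCode_aux_inj C hCns e he U hU x hx) S ∅
    (Finset.disjoint_empty_left _) (by simp only [Fintype.card_coe, Finset.card_empty]; omega)
    (fun c => w c) (fun c => w c) (by simp) (by
      intro s hs
      have h := hw s
      rw [← hE, Finset.sum_union hd0, Finset.sum_union hd12,
        Finset.sum_eq_zero (s := E2) (fun c hc => by rw [hH2 s hs c hc, zero_mul]), add_zero,
        ← Finset.sum_coe_sort E0, ← Finset.sum_coe_sort E1] at h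
      rw [← h, Finset.mul_sum]
      congr 1
      refine Finset.sum_congr rfl fun c _ => ?_
      rw [hH0, mul_assoc])
  have hi0 : i ∈ E0 := Finset.mem_filter.2 ⟨hiE, hir⟩
  have := congr_fun hx ⟨i, hi0⟩
  simp [w] at this
end

section
/- The code C*_{a,r} has the following erasure recovery property: for every erasure set E ⊆ {0,…,a(r+1)−1} with |E| ≤ a and any two codewords x, y ∈ C*_{a,r} satisfying x_j = y_j for all j ∉ E, one has x_i = y_i for all i ∈ E ∩ {0,…,r−1}; i.e., the code symbols with indices in E ∩ {0,…,r−1} are uniquely determined by the unerased code symbols. -/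
theorem det_mem_subfield {K : Type} [Field K] (F : Subfield K) {z : ℕ}
    (M : Matrix (Fin z) (Fin z) K) (h : ∀ i j, M i j ∈ F) : M.det ∈ F := by
  rw [Matrix.det_apply]
  refine sum_mem fun σ _ => ?_
  rw [Units.smul_def]
  exact zsmul_mem (prod_mem fun i _ => h _ _) _

theorem det_ne_zero_aux {K : Type} [Field K] (F : ℕ → Subfield K) (hF : Monotone F)
    {z : ℕ} (s : Fin z → ℕ) (hs : StrictMono s) (A B : Matrix (Fin z) (Fin z) K)
    (α : Fin z → K) (hA : ∀ i j, A i j ∈ F 0) (hdet : A.det ≠ 0)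
    (hα : ∀ k, α k ∈ F (s k)) (hB : ∀ k p, B k p ∈ F (s k - 1))
    (hk : ∀ k, (α k = 1 ∧ ∀ p, B k p = 0) ∨ (α k ∉ F (s k - 1))) :
    (Matrix.of fun k p => α k * A k p + B k p : Matrix (Fin z) (Fin z) K).det ≠ 0 := by
  have key : ∀ n : ℕ, n ≤ z →
      (Matrix.of fun k p => if (k : ℕ) < n then α k * A k p + B k p else A k p :
        Matrix (Fin z) (Fin z) K).det ≠ 0 := by
    intro n
    induction n with
    | zero =>
      intro _
      have : (Matrix.of fun k p => if ((k : Fin z) : ℕ) < 0 then α k * A k p + B k p else A k p :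
        Matrix (Fin z) (Fin z) K) = A := by ext; simp
      rw [this]; exact hdet
    | succ n ih =>
      intro hn
      have ih := ih (by omega)
      set k0 : Fin z := ⟨n, by omega⟩ with hk0
      set N : Matrix (Fin z) (Fin z) K :=
        Matrix.of fun k p => if (k : ℕ) < n then α k * A k p + B k p else A k p with hN
      have e1 : (Matrix.of fun k p => if ((k : Fin z) : ℕ) < n + 1 then α k * A k p + B k p
          else A k p : Matrix (Fin z) (Fin z) K)
          = N.updateRow k0 (α k0 • A k0 + B k0) := by
        ext k p
        by_cases h : k = k0
        · subst h; simp [hk0]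
        · have h' : (k : ℕ) ≠ n := fun h' => h (Fin.ext h')
          rw [Matrix.updateRow_ne h]
          simp only [hN, Matrix.of_apply]
          have : (k : ℕ) < n + 1 ↔ (k : ℕ) < n := by omega
          simp [this]
      have e2 : N.updateRow k0 (A k0) = N := by
        ext k p
        by_cases h : k = k0
        · subst h; simp [hN, hk0]
        · rw [Matrix.updateRow_ne h]
      rw [e1, Matrix.det_updateRow_add, Matrix.det_updateRow_smul, e2]
      have hNmem : ∀ k ≠ k0, ∀ p, N k p ∈ F (s k0 - 1) := by
        intro k hne p
        simp only [hN, Matrix.of_apply]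
        split_ifs with h
        · have hlt : s k < s k0 := hs (by rw [Fin.lt_def]; exact h)
          exact add_mem (mul_mem (hF (by omega) (hα k)) (hF (Nat.zero_le _) (hA k p)))
            (hF (by omega) (hB k p))
        · exact hF (Nat.zero_le _) (hA k p)
      rcases hk k0 with ⟨h1, h2⟩ | h
      · have : (N.updateRow k0 (B k0)).det = 0 :=
          Matrix.det_eq_zero_of_row_eq_zero k0 (by intro j; simp [h2])
        rw [this, h1]; simpa using ih
      · intro h0
        apply h
        have hD1 : N.det ∈ F (s k0 - 1) := by
          apply det_mem_subfield
          intro k p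
          by_cases hh : k = k0
          · subst hh; simp only [hN, Matrix.of_apply, hk0, lt_irrefl, if_false]
            exact hF (Nat.zero_le _) (hA _ _)
          · exact hNmem k hh p
        have hD2 : (N.updateRow k0 (B k0)).det ∈ F (s k0 - 1) := by
          apply det_mem_subfield
          intro k p
          by_cases hh : k = k0
          · subst hh; simpa using hB _ p
          · rw [Matrix.updateRow_ne hh]; exact hNmem k hh p
        have : α k0 = -(N.updateRow k0 (B k0)).det / N.det := by
          rw [eq_div_iff ih]; linear_combination h0
        rw [this]
        exact div_mem (neg_mem hD2) hD1
  have := key z le_rfl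
  simpa using this

theorem card_le_aux {K : Type} [Field K] {ι : Type} [Fintype ι] {a : ℕ}
    (w : Fin a → ι → K) (G : Finset (Fin a))
    (hG : ∀ i ∈ G, w i ∉ Submodule.span K (w '' {t | t ∈ G ∧ t < i})) :
    G.card ≤ Fintype.card ι := by
  have hli : LinearIndepOn K w (G : Set (Fin a)) := by
    induction G using Finset.induction_on_max with
    | empty => simp
    | insert x G hx ih =>
      rw [Finset.coe_insert]
      refine LinearIndepOn.insert (ih ?_) ?_
      · intro i hi hmem
        refine hG i (Finset.mem_insert_of_mem hi) (Submodule.span_mono (Set.image_mono ?_) hmem)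
        rintro t ⟨h1, h2⟩
        exact ⟨Finset.mem_insert_of_mem h1, h2⟩
      · intro hmem
        refine hG x (Finset.mem_insert_self _ _) (Submodule.span_mono (Set.image_mono ?_) hmem)
        intro t ht
        exact ⟨Finset.mem_insert_of_mem ht, hx t ht⟩
  have := LinearIndependent.fintype_card_le_finrank (R := K) hli
  simpa using this

theorem descent_aux {K : Type} [Field K] (F : Subfield K) {ι : Type} {a : ℕ}
    (w : Fin a → ι → K) (T : Finset (Fin a)) (v : ι → K)
    (hw : ∀ t ∈ T, ∀ c, w t c ∈ F) (hv : ∀ c, v c ∈ F)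
    (hmem : v ∈ Submodule.span K (w '' (T : Set (Fin a)))) :
    ∃ l : Fin a → K, (∀ t, l t ∈ F) ∧ ∀ c, v c = ∑ t ∈ T, l t * w t c := by
  rw [Submodule.mem_span_image_finset_iff_exists_fun] at hmem
  obtain ⟨l', hl'⟩ := hmem
  classical
  obtain ⟨l, hl⟩ : ∃ l : Fin a → K, ∑ t ∈ T, l t • w t = v := by
    refine ⟨fun t => if h : t ∈ T then l' ⟨t, h⟩ else 0, ?_⟩
    rw [← hl', ← Finset.sum_coe_sort T]
    refine Finset.sum_congr rfl fun t _ => ?_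
    simp
  obtain ⟨π, hπ⟩ := LinearMap.exists_leftInverse_of_injective (Algebra.linearMap F K)
    (LinearMap.ker_eq_bot.2 (algebraMap F K).injective)
  have hπ' : ∀ x : F, π (x : K) = x := fun x => LinearMap.congr_fun hπ x
  refine ⟨fun t => (π (l t) : K), fun t => (π (l t)).2, fun c => ?_⟩
  have h1 : v c = ∑ t ∈ T, l t * w t c := by rw [← hl]; simp
  have h2 : π (v c) = ∑ t ∈ T, π (l t * w t c) := by rw [h1, map_sum]
  have h3 : (π (v c) : K) = v c := congrArg Subtype.val (hπ' ⟨v c, hv c⟩)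
  rw [← h3, h2, AddSubmonoidClass.coe_finsetSum]
  refine Finset.sum_congr rfl fun t ht => ?_
  have : l t * w t c = (⟨w t c, hw t ht c⟩ : F) • l t := by
    rw [Subfield.smul_def, smul_eq_mul, mul_comm]
  rw [this, map_smul]
  simp [mul_comm]

theorem recover_aux {K : Type} [Field K] (F : ℕ → Subfield K) (hF : Monotone F) {a : ℕ}
    {κ ι : Type} [Fintype κ] [Fintype ι] (A : κ → Fin a → K) (hA : ∀ p i, A p i ∈ F 0)
    (hdet : ∀ (z : ℕ) (ρ : Fin z → κ) (σ : Fin z → Fin a), Function.Injective ρ →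
      Function.Injective σ → (Matrix.of fun k p => A (ρ p) (σ k) :
        Matrix (Fin z) (Fin z) K).det ≠ 0)
    (α : Fin a → K) (hα01 : ∀ j : Fin a, (j : ℕ) ≤ 1 → α j = 1)
    (hαmem : ∀ j : Fin a, 2 ≤ (j : ℕ) → α j ∈ F (j : ℕ) ∧ α j ∉ F ((j : ℕ) - 1))
    (w : Fin a → ι → K) (hw : ∀ (i : Fin a) c, w i c ∈ F ((i : ℕ) - 1))
    (hw0 : ∀ i : Fin a, (i : ℕ) = 0 → w i = 0)
    (R : Finset (Fin a)) (hR : Fintype.card κ + Fintype.card ι ≤ R.card)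
    (d : κ → K) (d' : ι → K)
    (heq : ∀ i ∈ R, ∑ p, α i * A p i * d p + ∑ c, w i c * d' c = 0) : d = 0 := by
  classical
  have hαm : ∀ j : Fin a, α j ∈ F (j : ℕ) := by
    intro j
    by_cases h : 2 ≤ (j : ℕ)
    · exact (hαmem j h).1
    · rw [hα01 j (by omega)]; exact one_mem _
  let T : Fin a → Finset (Fin a) := fun i => R.filter fun t => 1 ≤ (t : ℕ) ∧ t < i
  let S : Finset (Fin a) :=
    R.filter fun i => w i ∈ Submodule.span K (w '' (T i : Set (Fin a)))
  have hG : (R \ S).card ≤ Fintype.card ι := by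
    apply card_le_aux w
    intro i hi hmem
    rw [Finset.mem_sdiff] at hi
    apply hi.2
    refine Finset.mem_filter.2 ⟨hi.1, Submodule.span_mono (Set.image_mono ?_) hmem⟩
    rintro t ⟨h1, h2⟩
    rw [Finset.mem_sdiff] at h1
    refine Finset.mem_coe.2 (Finset.mem_filter.2 ⟨h1.1, ?_, h2⟩)
    by_contra h0
    apply h1.2
    refine Finset.mem_filter.2 ⟨h1.1, ?_⟩
    rw [hw0 t (by omega)]; exact zero_mem _
  have hSR : S ⊆ R := Finset.filter_subset _ _
  have hS : Fintype.card κ ≤ S.card := by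
    have := Finset.card_sdiff_add_card_eq_card hSR
    omega
  obtain ⟨S', hS', hcard⟩ := Finset.exists_subset_card_eq hS
  have hrow : ∀ i ∈ S, ∃ b : κ → K, (∀ p, b p ∈ F ((i : ℕ) - 1)) ∧ ((i : ℕ) ≤ 1 → ∀ p, b p = 0) ∧
      ∑ p, (α i * A p i + b p) * d p = 0 := by
    intro i hi
    obtain ⟨l, hl, hl2⟩ := descent_aux (F ((i : ℕ) - 1)) w (T i) (w i)
      (fun t ht c => hF (by
        have := (Finset.mem_filter.1 ht).2.2
        rw [Fin.lt_def] at this; omega) (hw t c)) (hw i) (Finset.mem_filter.1 hi).2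
    refine ⟨fun p => -∑ t ∈ T i, l t * (α t * A p t), ?_, ?_, ?_⟩
    · intro p
      refine neg_mem (sum_mem fun t ht => mul_mem (hl t) (mul_mem (hF ?_ (hαm t))
        (hF (Nat.zero_le _) (hA p t))))
      have := (Finset.mem_filter.1 ht).2.2
      rw [Fin.lt_def] at this; omega
    · intro h1 p
      have : T i = ∅ := by
        refine Finset.filter_eq_empty_iff.2 fun t _ h => ?_
        have := h.2
        rw [Fin.lt_def] at this; omega
      simp [this]
    · have e0 := heq i (hSR hi)
      have e1 : ∑ t ∈ T i, l t * (∑ p, α t * A p t * d p + ∑ c, w t c * d' c) = 0 :=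
        Finset.sum_eq_zero fun t ht => by
          rw [heq t (Finset.mem_filter.1 ht).1, mul_zero]
      have e2 : ∑ c, w i c * d' c = ∑ t ∈ T i, l t * ∑ c, w t c * d' c := by
        simp_rw [hl2, Finset.sum_mul, Finset.mul_sum]
        rw [Finset.sum_comm]
        simp_rw [mul_assoc]
      have e3 : ∑ p, (-∑ t ∈ T i, l t * (α t * A p t)) * d p
          = -∑ t ∈ T i, l t * ∑ p, α t * A p t * d p := by
        simp_rw [neg_mul, Finset.sum_neg_distrib, Finset.sum_mul, Finset.mul_sum]
        rw [Finset.sum_comm]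
        simp_rw [mul_assoc]
      simp_rw [mul_add, Finset.sum_add_distrib] at e1
      simp_rw [add_mul, Finset.sum_add_distrib]
      rw [e3]
      linear_combination e0 - e1 - e2
  choose! b hb1 hb2 hb3 using hrow
  let σ := S'.orderEmbOfFin hcard
  let ρ := (Fintype.equivFin κ).symm
  have hσ : ∀ k, σ k ∈ S := fun k => hS' (Finset.orderEmbOfFin_mem _ _ _)
  have hne := det_ne_zero_aux F hF (fun k => (σ k : ℕ)) (fun x y h => by
      have := σ.strictMono h
      exact this)
    (Matrix.of fun k p => A (ρ p) (σ k)) (Matrix.of fun k p => b (σ k) (ρ p))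
    (fun k => α (σ k)) (fun i j => hA _ _) (hdet _ _ _ ρ.injective σ.injective)
    (fun k => hαm _) (fun k p => hb1 _ (hσ k) _) (fun k => by
      by_cases h : 2 ≤ (σ k : ℕ)
      · exact Or.inr (hαmem _ h).2
      · exact Or.inl ⟨hα01 _ (by omega), fun p => hb2 _ (hσ k) (by omega) _⟩)
  have hz := Matrix.eq_zero_of_mulVec_eq_zero hne (v := fun p => d (ρ p)) (by
    ext k
    simp only [Matrix.mulVec, dotProduct, Matrix.of_apply, Pi.zero_apply]
    rw [← hb3 _ (hσ k)]
    exact Equiv.sum_comp ρ (fun p => (α (σ k) * A p (σ k) + b (σ k) p) * d p))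
  ext p
  have := congrFun hz (ρ.symm p)
  simpa using this

/-- Erasure-recovery property of the scalar code `C*_{a,r}`: for any erasure set
`E` of size at most `a`, the code symbols with indices in `E ∩ {0,…,r-1}` are
uniquely determined by the unerased code symbols. -/
theorem starCode_erasure_recovery
    (K : Type) [Field K] [Fintype K] (q a r : ℕ)
    (hq : IsPrimePow q) (ha : 2 ≤ a) (hr : 1 ≤ r)
    (Fsub : ℕ → Subfield K) (hmono : Monotone Fsub)
    (hcard : ∀ j ≤ a - 1, Nat.card (Fsub j) = q ^ 2 ^ (j - 1))
    (htop : Fsub (a - 1) = ⊤)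
    (C : Matrix (Fin r) (Fin a) K) (hC : ∀ i j, C i j ∈ Fsub 0)
    (hCns : AllSquareSubmatricesNonsingular C)
    (α : Fin a → K)
    (hα01 : ∀ j : Fin a, (j : ℕ) ≤ 1 → α j = 1)
    (hαmem : ∀ j : Fin a, 2 ≤ (j : ℕ) → α j ∈ Fsub (j : ℕ) ∧ α j ∉ Fsub ((j : ℕ) - 1))
    :
    ∀ E : Finset (Fin (a * (r + 1))), E.card ≤ a →
      ∀ x y : Fin (a * (r + 1)) → K,
        x ∈ starCode (gammaMatrix C α) → y ∈ starCode (gammaMatrix C α) →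
        (∀ j, j ∉ E → x j = y j) →
        ∀ i ∈ E, (i : ℕ) < r → x i = y i := by
  classical
  intro E hE x y hx hy hxy i0 hi0 hi0r
  have hHd : ∀ i, ∑ c, starH (gammaMatrix C α) i c * (x c - y c) = 0 := by
    intro i
    have h1 := congrFun hx i
    have h2 := congrFun hy i
    simp only [Matrix.mulVec, dotProduct, Pi.zero_apply] at h1 h2
    simp_rw [mul_sub, Finset.sum_sub_distrib, h1, h2, sub_zero]
  have hHE : ∀ i, ∑ c ∈ E, starH (gammaMatrix C α) i c * (x c - y c) = 0 := by
    intro i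
    rw [← hHd i]
    refine Finset.sum_subset (Finset.subset_univ _) fun c _ hc => ?_
    rw [hxy c hc, sub_self, mul_zero]
  have hαm : ∀ j : Fin a, α j ∈ Fsub (j : ℕ) := by
    intro j
    by_cases h : 2 ≤ (j : ℕ)
    · exact (hαmem j h).1
    · rw [hα01 j (by omega)]; exact one_mem _
  have hra : r ≤ a * r := Nat.le_mul_of_pos_left r (by omega)
  let E0 := E.filter fun (c : Fin (a * (r + 1))) => (c : ℕ) < r
  let E1 := E.filter fun (c : Fin (a * (r + 1))) => r ≤ (c : ℕ) ∧ (c : ℕ) < a * r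
  let par : Fin a → Fin (a * (r + 1)) := fun i => ⟨a * r + i, by
    have := i.isLt; rw [Nat.mul_succ]; omega⟩
  have hparinj : Function.Injective par := by
    intro i j h
    have := congrArg Fin.val h
    simp only [par] at this
    exact Fin.ext (by omega)
  let Rc := (Finset.univ : Finset (Fin a)).filter fun i => par i ∈ E
  let R := (Finset.univ : Finset (Fin a)).filter fun i => par i ∉ E
  have hRR : Rc.card + R.card = a := by
    have := Finset.card_filter_add_card_filter_not (s := (Finset.univ : Finset (Fin a)))
      (fun i => par i ∈ E)
    simpa [Rc, R] using this
  let E2 := Rc.image par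
  have hE2 : E2.card = Rc.card := Finset.card_image_of_injective _ hparinj
  have hmE2 : ∀ c, c ∈ E2 ↔ c ∈ E ∧ a * r ≤ (c : ℕ) := by
    intro c
    simp only [E2, Rc, Finset.mem_image, Finset.mem_filter, Finset.mem_univ, true_and]
    constructor
    · rintro ⟨i, h, rfl⟩
      exact ⟨h, by simp [par]⟩
    · rintro ⟨h, h2⟩
      have hlt := c.isLt
      have hm : a * (r + 1) = a * r + a := Nat.mul_succ _ _
      have : par ⟨(c : ℕ) - a * r, by omega⟩ = c := Fin.ext (by simp only [par]; omega)
      exact ⟨_, by rw [this]; exact h, this⟩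
  have hEu : E = (E0 ∪ E1) ∪ E2 := by
    ext c
    rw [Finset.mem_union, Finset.mem_union, hmE2]
    simp only [E0, E1, Finset.mem_filter]
    have : (c : ℕ) < r ∨ (r ≤ (c : ℕ) ∧ (c : ℕ) < a * r) ∨ a * r ≤ (c : ℕ) := by omega
    tauto
  have hd01 : Disjoint E0 E1 := by
    rw [Finset.disjoint_left]
    intro c h1 h2
    simp only [E0, E1, Finset.mem_filter] at h1 h2
    omega
  have hd2 : Disjoint (E0 ∪ E1) E2 := by
    rw [Finset.disjoint_left]
    intro c h1 h2
    rw [hmE2] at h2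
    simp only [E0, E1, Finset.mem_filter, Finset.mem_union] at h1
    omega
  have hcardE : E.card = E0.card + E1.card + E2.card := by
    conv_lhs => rw [hEu]
    rw [Finset.card_union_of_disjoint hd2, Finset.card_union_of_disjoint hd01]
  have hr0 : ∀ p : E0, ((p : Fin (a * (r + 1))) : ℕ) < r := fun p =>
    (Finset.mem_filter.1 p.2).2
  let A : E0 → Fin a → K := fun p i => C ⟨(p : Fin (a * (r + 1))), hr0 p⟩ i
  have hmain := recover_aux Fsub hmono (κ := E0) (ι := E1) A (fun p i => hC _ _)
    (by
      intro z ρ σ hρ hσ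
      have := hCns z (fun p => ⟨(ρ p : Fin (a * (r + 1))), hr0 (ρ p)⟩) σ (by
        intro p p' h
        apply hρ
        have := congrArg Fin.val h
        exact Subtype.ext (Fin.ext this)) hσ
      rw [← Matrix.det_transpose] at this
      exact this)
    α hα01 hαmem (fun i c => starH (gammaMatrix C α) i c)
    (by
      intro i c
      have hc := (Finset.mem_filter.1 c.2).2
      have hdiv : 1 ≤ ((c : Fin (a * (r + 1))) : ℕ) / r := (Nat.one_le_div_iff (by omega)).2 hc.1
      simp only [starH, gammaMatrix, Matrix.of_apply, dif_pos hc.2]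
      split_ifs with h
      · refine mul_mem (hmono (Nat.zero_le _) (hC _ _)) (hmono ?_ (hαm _))
        simp only
        omega
      · exact zero_mem _)
    (by
      intro i hi
      ext c
      have hc := (Finset.mem_filter.1 c.2).2
      have hdiv : 1 ≤ ((c : Fin (a * (r + 1))) : ℕ) / r := (Nat.one_le_div_iff (by omega)).2 hc.1
      simp only [starH, gammaMatrix, Matrix.of_apply, dif_pos hc.2, Pi.zero_apply]
      rw [dif_neg (by omega)])
    R (by simp only [Fintype.card_coe]; omega)
    (fun p => x p - y p) (fun p => x p - y p)
    (by
      intro i hi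
      have h := hHE i
      rw [hEu, Finset.sum_union hd2, Finset.sum_union hd01] at h
      have h2 : ∑ c ∈ E2, starH (gammaMatrix C α) i c * (x c - y c) = 0 := by
        refine Finset.sum_eq_zero fun c hc => ?_
        have hc' := (hmE2 c).1 hc
        have hne : (c : ℕ) - a * r ≠ (i : ℕ) := by
          intro he
          apply (Finset.mem_filter.1 hi).2
          have : par i = c := Fin.ext (by simp only [par]; omega)
          rw [this]; exact hc'.1
        simp only [starH, Matrix.of_apply]
        rw [dif_neg (by omega), if_neg hne, zero_mul]
      rw [h2, add_zero, ← Finset.sum_coe_sort E0, ← Finset.sum_coe_sort E1] at h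
      rw [← h]
      congr 1
      refine Finset.sum_congr rfl fun p _ => ?_
      congr 1
      have hp := hr0 p
      have hdiv : ((p : Fin (a * (r + 1))) : ℕ) / r = 0 := Nat.div_eq_of_lt hp
      have hmod : ((p : Fin (a * (r + 1))) : ℕ) % r = p := Nat.mod_eq_of_lt hp
      simp only [starH, gammaMatrix, Matrix.of_apply, A]
      rw [dif_pos (by omega), dif_pos (by omega), mul_comm]
      simp only [hdiv, hmod, Nat.sub_zero])
  have := congrFun hmain ⟨i0, Finset.mem_filter.2 ⟨hi0, hi0r⟩⟩
  exact sub_eq_zero.1 this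
end

section
/- For every integer h with 1 ≤ h ≤ a, the Construction-1 packet-level code C_{(a,a(r+1)−1,r)} is an (h, h(r+1)−1) streaming code; i.e., it recovers each message packet within delay h(r+1)−1 whenever at most h packets are erased in the corresponding sliding window. In particular the decoding delay of Construction 1 degrades gracefully with the number of erasures. -/
section GDHelpers

theorem gd_det_mem {K : Type} [Field K] (L : Subfield K) {ι : Type} [Fintype ι] [DecidableEq ι]
    (M : Matrix ι ι K) (h : ∀ i j, M i j ∈ L) : M.det ∈ L := by
  rw [Matrix.det_apply']
  refine sum_mem fun σ _ => mul_mem ?_ (prod_mem fun i _ => h _ _)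
  exact intCast_mem L _

theorem gd_row_swap {K : Type} [Field K] (L : Subfield K) {ι ρ : Type}
    (S : Finset ι) (R : Finset ρ) (hc : S.card = R.card) (x0 : ρ) (hx0 : x0 ∈ R)
    (f g : ρ → ι → K) (hgL : ∀ x ∈ R, ∀ s ∈ S, g x s ∈ L)
    (A : ι → K) (hA : ∀ s ∈ S, A s ∈ L) (α : K) (hα : α ∉ L)
    (heq : ∀ x ∈ R, x ≠ x0 → ∀ s ∈ S, f x s = g x s)
    (h0 : ∀ s ∈ S, f x0 s = A s + α * g x0 s)
    (hinj : ∀ v : ι → K, (∀ x ∈ R, ∑ s ∈ S, g x s * v s = 0) → ∀ s ∈ S, v s = 0) :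
    ∀ v : ι → K, (∀ x ∈ R, ∑ s ∈ S, f x s * v s = 0) → ∀ s ∈ S, v s = 0 := by
  classical
  let e : S ≃ R := Finset.equivOfCardEq hc
  let M : Matrix S S K := Matrix.of fun i j => g (e i) j
  let N : Matrix S S K := Matrix.of fun i j => f (e i) j
  let i0 : S := e.symm ⟨x0, hx0⟩
  have hM : M.det ≠ 0 := by
    intro hd
    obtain ⟨v, hv0, hv⟩ := Matrix.exists_mulVec_eq_zero_iff.2 hd
    apply hv0
    have := hinj (fun s => if h : s ∈ S then v ⟨s, h⟩ else 0) (by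
      intro x hx
      have h1 := congrFun hv (e.symm ⟨x, hx⟩)
      simp only [Matrix.mulVec, dotProduct, M, Matrix.of_apply, Equiv.apply_symm_apply,
        Pi.zero_apply] at h1
      rw [← h1, ← Finset.sum_coe_sort S]
      refine Finset.sum_congr rfl fun s _ => ?_
      simp)
    funext s
    have h2 := this s s.2
    simpa using h2
  have hN : N = M.updateRow i0 ((fun s : S => A s) + α • M i0) := by
    ext i j
    by_cases hi : i = i0
    · subst hi
      simp [N, M, i0, h0 j j.2]
    · rw [Matrix.updateRow_ne hi]
      refine heq _ (e i).2 ?_ _ j.2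
      intro h
      apply hi
      simp only [i0]
      rw [Equiv.eq_symm_apply]
      exact Subtype.ext h
  have hMdet : M.det ∈ L := gd_det_mem L M fun i j => hgL _ (e i).2 _ j.2
  have hAdet : (M.updateRow i0 (fun s : S => A s)).det ∈ L := by
    refine gd_det_mem L _ fun i j => ?_
    by_cases hi : i = i0
    · subst hi; simpa using hA j j.2
    · rw [Matrix.updateRow_ne hi]; exact hgL _ (e i).2 _ j.2
  have hNdet : N.det = (M.updateRow i0 (fun s : S => A s)).det + α * M.det := by
    rw [hN, Matrix.det_updateRow_add, Matrix.det_updateRow_smul, Matrix.updateRow_eq_self]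
  have hN0 : N.det ≠ 0 := by
    intro h
    rw [hNdet] at h
    apply hα
    have : α = -(M.updateRow i0 (fun s : S => A s)).det / M.det := by
      field_simp
      linear_combination h
    rw [this]
    exact div_mem (neg_mem hAdet) hMdet
  intro v hv s hs
  have h3 : N.mulVec (fun s : S => v s) = 0 := by
    funext i
    have := hv (e i) (e i).2
    rw [← Finset.sum_coe_sort S] at this
    simpa [Matrix.mulVec, dotProduct, N] using this
  have h4 := Matrix.eq_zero_of_mulVec_eq_zero hN0 h3
  exact congrFun h4 ⟨s, hs⟩

def gdEnt {K : Type} [Field K] {r : ℕ} (C : Fin r → ℕ → K) (α : ℕ → K) (B : Finset ℕ)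
    (x : ℕ) (s : ℕ × Fin r) : K :=
  if x ∈ B then (if s.1 ≤ x then C s.2 (x - s.1) * α (x - s.1) else 0)
  else (if s.1 = 0 then C s.2 x else 0)

theorem gd_main {K : Type} [Field K] {r a : ℕ} (F : ℕ → Subfield K) (hmono : Monotone F)
    (C : Fin r → ℕ → K) (α : ℕ → K) (hC : ∀ i j, C i j ∈ F 0)
    (hminor : ∀ (S : Finset (Fin r)) (R : Finset ℕ), (∀ x ∈ R, x < a) → S.card = R.card →
      ∀ v : Fin r → K, (∀ x ∈ R, ∑ i ∈ S, C i x * v i = 0) → ∀ i ∈ S, v i = 0)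
    (hα01 : ∀ j ≤ 1, α j = 1) (hαm : ∀ j < a, α j ∈ F j)
    (hαn : ∀ j < a, 2 ≤ j → α j ∉ F (j - 1)) :
    ∀ (N : ℕ) (S : Finset (ℕ × Fin r)) (R B : Finset ℕ), ∑ s ∈ S, (s.1 + 1) + B.card ≤ N →
      (∀ x ∈ R, x < a) → B ⊆ R → S.card = R.card →
      (∀ g, (S.filter (fun s => g < s.1)).card ≤ (B.filter (fun b => g < b)).card) →
      ∀ v : ℕ × Fin r → K, (∀ x ∈ R, ∑ s ∈ S, gdEnt C α B x s * v s = 0) →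
        ∀ s ∈ S, v s = 0 := by
  intro N
  induction N with
  | zero =>
    intro S R B hN _ _ _ _ v _ s hs
    have : s.1 + 1 ≤ ∑ s ∈ S, (s.1 + 1) :=
      Finset.single_le_sum (f := fun s : ℕ × Fin r => s.1 + 1) (fun _ _ => Nat.zero_le _) hs
    omega
  | succ N ih =>
    intro S R B hN hR hBR hc hg v hv
    by_cases hsplit : ∃ g, (S.filter (fun s => g < s.1)).Nonempty ∧
        (S.filter (fun s => g < s.1)).card = (B.filter (fun b => g < b)).card
    · obtain ⟨g, hne, heq⟩ := hsplit
      have hsum : ∑ s ∈ S.filter (fun s => g < s.1), (s.1 + 1) +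
          ∑ s ∈ S.filter (fun s => ¬ g < s.1), (s.1 + 1) = ∑ s ∈ S, (s.1 + 1) :=
        Finset.sum_filter_add_sum_filter_not S _ _
      have hpos : ∑ s ∈ S.filter (fun s => g < s.1), ((s.1 - (g+1)) + 1) <
          ∑ s ∈ S.filter (fun s => g < s.1), (s.1 + 1) := by
        apply Finset.sum_lt_sum_of_nonempty hne
        intro s hs
        have := (Finset.mem_filter.1 hs).2
        omega
      have hSc : (S.filter (fun s => g < s.1)).card + (S.filter (fun s => ¬ g < s.1)).card
          = S.card := Finset.card_filter_add_card_filter_not _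
      have hBc : (B.filter (fun s => g < s)).card + (B.filter (fun s => ¬ g < s)).card
          = B.card := Finset.card_filter_add_card_filter_not _
      have hBgR : B.filter (fun b => g < b) ⊆ R := (Finset.filter_subset _ _).trans hBR
      have first : ∀ s ∈ S.filter (fun s => ¬ g < s.1), v s = 0 := by
        apply ih (S.filter (fun s => ¬ g < s.1)) (R \ B.filter (fun b => g < b))
          (B.filter (fun b => ¬ g < b))
        · omega
        · intro x hx; exact hR x (Finset.mem_sdiff.1 hx).1
        · intro x hx
          rw [Finset.mem_filter] at hx
          rw [Finset.mem_sdiff, Finset.mem_filter]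
          exact ⟨hBR hx.1, fun h => hx.2 h.2⟩
        · rw [Finset.card_sdiff_of_subset hBgR]
          omega
        · intro g'
          rw [Finset.filter_filter, Finset.filter_filter]
          by_cases hgg : g ≤ g'
          · rw [Finset.card_eq_zero.2]
            · omega
            · apply Finset.filter_eq_empty_iff.2
              intro s _ h
              omega
          · have e1 := Finset.card_filter_add_card_filter_not (s := S.filter (fun s => g' < s.1))
              (fun s => g < s.1)
            have e2 := Finset.card_filter_add_card_filter_not (s := B.filter (fun s => g' < s))
              (fun s => g < s)
            rw [Finset.filter_filter, Finset.filter_filter] at e1 e2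
            have f1 : S.filter (fun s => g' < s.1 ∧ g < s.1) = S.filter (fun s => g < s.1) :=
              Finset.filter_congr fun s _ => by omega
            have f2 : B.filter (fun s => g' < s ∧ g < s) = B.filter (fun s => g < s) :=
              Finset.filter_congr fun s _ => by omega
            have f3 : S.filter (fun s => g' < s.1 ∧ ¬ g < s.1)
                = S.filter (fun s => ¬ g < s.1 ∧ g' < s.1) :=
              Finset.filter_congr fun s _ => by omega
            have f4 : B.filter (fun s => g' < s ∧ ¬ g < s)
                = B.filter (fun s => ¬ g < s ∧ g' < s) :=
              Finset.filter_congr fun s _ => by omega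
            rw [f1, f3] at e1
            rw [f2, f4] at e2
            have := hg g'
            omega
        · intro x hx
          rw [Finset.mem_sdiff, Finset.mem_filter] at hx
          rw [← hv x hx.1, Finset.sum_filter]
          refine Finset.sum_congr rfl fun s _ => ?_
          by_cases hs : g < s.1
          · rw [if_neg (by omega)]
            unfold gdEnt
            by_cases hxB : x ∈ B
            · have : ¬ g < x := fun h => hx.2 ⟨hxB, h⟩
              rw [if_pos hxB, if_neg (by omega), zero_mul]
            · rw [if_neg hxB, if_neg (by omega), zero_mul]
          · rw [if_pos hs]
            congr 1
            unfold gdEnt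
            by_cases hxB : x ∈ B
            · have : ¬ g < x := fun h => hx.2 ⟨hxB, h⟩
              rw [if_pos hxB, if_pos (by rw [Finset.mem_filter]; exact ⟨hxB, this⟩)]
            · rw [if_neg hxB, if_neg (by rw [Finset.mem_filter]; exact fun h => hxB h.1)]
      have second : ∀ s ∈ S.filter (fun s => g < s.1), v s = 0 := by
        set sh : ℕ × Fin r → ℕ × Fin r := fun s => (s.1 - (g+1), s.2) with hsh
        have inj1 : Set.InjOn sh (S.filter (fun s => g < s.1) : Finset _) := by
          intro s hs s' hs' h
          have h1 := (Finset.mem_filter.1 hs).2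
          have h2 := (Finset.mem_filter.1 hs').2
          simp only [hsh, Prod.mk.injEq] at h
          refine Prod.ext ?_ h.2
          omega
        have inj2 : Set.InjOn (fun b => b - (g+1)) (B.filter (fun b => g < b) : Finset ℕ) := by
          intro s hs s' hs' h
          have h1 := (Finset.mem_filter.1 hs).2
          have h2 := (Finset.mem_filter.1 hs').2
          simp only at h
          omega
        have key := ih ((S.filter (fun s => g < s.1)).image sh)
          ((B.filter (fun b => g < b)).image (fun b => b - (g+1)))
          ((B.filter (fun b => g < b)).image (fun b => b - (g+1)))
          (by
            rw [Finset.sum_image inj1, Finset.card_image_of_injOn inj2]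
            simp only [hsh]
            omega)
          (by
            intro x hx
            obtain ⟨b, hb, rfl⟩ := Finset.mem_image.1 hx
            have := hR b (hBgR hb)
            omega)
          (Finset.Subset.refl _)
          (by rw [Finset.card_image_of_injOn inj1, Finset.card_image_of_injOn inj2, heq])
          (by
            intro g'
            rw [Finset.filter_image, Finset.filter_image,
              Finset.card_image_of_injOn (inj1.mono (by
                exact_mod_cast Finset.filter_subset _ _)),
              Finset.card_image_of_injOn (inj2.mono (by
                exact_mod_cast Finset.filter_subset _ _)),
              Finset.filter_filter, Finset.filter_filter]
            have f1 : S.filter (fun s => g < s.1 ∧ g' < (sh s).1)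
                = S.filter (fun s => g + 1 + g' < s.1) :=
              Finset.filter_congr fun s _ => by simp only [hsh]; omega
            have f2 : B.filter (fun s => g < s ∧ g' < s - (g+1))
                = B.filter (fun s => g + 1 + g' < s) :=
              Finset.filter_congr fun s _ => by omega
            rw [f1, f2]
            exact hg _)
          (fun s => v (s.1 + (g+1), s.2))
          (by
            intro x hx
            obtain ⟨b, hb, rfl⟩ := Finset.mem_image.1 hx
            have hbR := hBgR hb
            have hb' := Finset.mem_filter.1 hb
            rw [Finset.sum_image inj1, ← hv b hbR,
              ← Finset.sum_filter_add_sum_filter_not S (fun s => g < s.1)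
                (fun s => gdEnt C α B b s * v s),
              Finset.sum_eq_zero (s := S.filter (fun s => ¬ g < s.1)) (fun s hs => by
                rw [first s hs, mul_zero]), add_zero]
            refine Finset.sum_congr rfl fun s hs => ?_
            have hs' := (Finset.mem_filter.1 hs).2
            have e1 : ((sh s).1 + (g+1), (sh s).2) = s := by
              refine Prod.ext ?_ rfl
              simp only [hsh]; omega
            rw [e1]
            congr 1
            unfold gdEnt
            rw [if_pos hx, if_pos hb'.1]
            simp only [hsh]
            have e2 : b - (g+1) - (s.1 - (g+1)) = b - s.1 := by omega
            rw [e2]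
            by_cases hle : s.1 ≤ b
            · rw [if_pos hle, if_pos (by omega)]
            · rw [if_neg hle, if_neg (by omega)])
        intro s hs
        have hs' := (Finset.mem_filter.1 hs).2
        have := key (sh s) (Finset.mem_image_of_mem _ hs)
        have e1 : ((sh s).1 + (g+1), (sh s).2) = s := by
          refine Prod.ext ?_ rfl
          simp only [hsh]; omega
        simpa only [e1] using this
      intro s hs
      by_cases h : g < s.1
      · exact second s (Finset.mem_filter.2 ⟨hs, h⟩)
      · exact first s (Finset.mem_filter.2 ⟨hs, h⟩)
    · push Not at hsplit
      by_cases hB2 : ∃ b ∈ B, 2 ≤ b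
      · obtain ⟨b1, hb1, hb12⟩ := hB2
        have hBne : B.Nonempty := ⟨b1, hb1⟩
        set b := B.max' hBne with hb
        have hbB : b ∈ B := B.max'_mem hBne
        have hble : ∀ x ∈ B, x ≤ b := fun x hx => B.le_max' x hx
        have hb2 : 2 ≤ b := hb12.trans (hble _ hb1)
        have hba : b < a := hR b (hBR hbB)
        have hC' : ∀ i j, C i j ∈ F (b - 1) := fun i j => hmono (Nat.zero_le _) (hC i j)
        have hα' : ∀ j < b, α j ∈ F (b - 1) := fun j hj =>
          hmono (by omega) (hαm j (by omega))
        refine gd_row_swap (F (b-1)) S R hc b (hBR hbB) (gdEnt C α B) (gdEnt C α (B.erase b))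
          ?_ (fun s => if s.1 = 0 then 0 else gdEnt C α B b s) ?_ (α b) (hαn b hba hb2) ?_ ?_ ?_
          v hv
        · intro x hx s hs
          unfold gdEnt
          by_cases hxB : x ∈ B.erase b
          · rw [if_pos hxB]
            rw [Finset.mem_erase] at hxB
            have := hble x hxB.2
            split_ifs
            · exact mul_mem (hC' _ _) (hα' _ (by omega))
            · exact zero_mem _
          · rw [if_neg hxB]
            split_ifs
            · exact hC' _ _
            · exact zero_mem _
        · intro s hs
          simp only [gdEnt, if_pos hbB]
          split_ifs
          · exact zero_mem _
          · exact mul_mem (hC' _ _) (hα' _ (by omega))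
          · exact zero_mem _
        · intro x hx hxb s hs
          simp [gdEnt, hxb]
        · intro s hs
          by_cases h : s.1 = 0
          · simp [gdEnt, hbB, h, mul_comm]
          · simp [gdEnt, hbB, h]
        · refine ih S R (B.erase b) ?_ hR ((Finset.erase_subset _ _).trans hBR) hc ?_
          · have := Finset.card_erase_lt_of_mem hbB
            omega
          · intro g
            by_cases hne : (S.filter (fun s => g < s.1)).Nonempty
            · have h1 := hsplit g hne
              have h2 := hg g
              have h3 : (B.filter (fun b => g < b)).card - 1 ≤
                  ((B.filter (fun b => g < b)).erase b).card := Finset.pred_card_le_card_erase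
              have h5 : (B.erase b).filter (fun b => g < b) = (B.filter (fun b => g < b)).erase b := by
                ext x; simp only [Finset.mem_filter, Finset.mem_erase]; tauto
              rw [h5]
              omega
            · rw [Finset.not_nonempty_iff_eq_empty] at hne
              rw [hne]; simp
      · push Not at hB2
        have hS0 : ∀ s ∈ S, s.1 = 0 := by
          by_contra hcon
          push Not at hcon
          obtain ⟨s, hs, hs0⟩ := hcon
          have h1 := hsplit 0 ⟨s, Finset.mem_filter.2 ⟨hs, by omega⟩⟩
          have h2 := hg 0
          have h4 : 0 < (S.filter (fun s => 0 < s.1)).card :=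
            Finset.card_pos.2 ⟨s, Finset.mem_filter.2 ⟨hs, by omega⟩⟩
          have h3 : (B.filter (fun b => 0 < b)).card ≤ ({1} : Finset ℕ).card := by
            apply Finset.card_le_card
            intro x hx
            rw [Finset.mem_filter] at hx
            have := hB2 x hx.1
            rw [Finset.mem_singleton]; omega
          rw [Finset.card_singleton] at h3
          omega
        have inj : Set.InjOn (Prod.snd : ℕ × Fin r → Fin r) (S : Set (ℕ × Fin r)) := by
          intro s hs s' hs' h
          exact Prod.ext ((hS0 s hs).trans (hS0 s' hs').symm) h
        have key := hminor (S.image Prod.snd) R hR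
          (by rw [Finset.card_image_of_injOn inj, hc]) (fun i => v (0, i)) (by
            intro x hx
            rw [Finset.sum_image inj, ← hv x hx]
            refine Finset.sum_congr rfl fun s hs => ?_
            have e : ((0 : ℕ), s.2) = s := Prod.ext (hS0 s hs).symm rfl
            rw [e]
            congr 1
            unfold gdEnt
            rw [hS0 s hs]
            by_cases hxB : x ∈ B
            · have := hB2 x hxB
              simp [hxB, hα01 x (by omega)]
            · simp [hxB])
        intro s hs
        have := key s.2 (Finset.mem_image_of_mem _ hs)
        have e : ((0 : ℕ), s.2) = s := Prod.ext (hS0 s hs).symm rfl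
        rwa [e] at this

theorem gd_minor {K : Type} [Field K] {r a : ℕ} (C : Matrix (Fin r) (Fin a) K)
    (hCns : AllSquareSubmatricesNonsingular C) (C' : Fin r → ℕ → K)
    (hC' : ∀ i (j : Fin a), C' i j = C i j) (S : Finset (Fin r)) (R : Finset ℕ)
    (hR : ∀ x ∈ R, x < a) (hc : S.card = R.card) (v : Fin r → K)
    (hv : ∀ x ∈ R, ∑ i ∈ S, C' i x * v i = 0) : ∀ i ∈ S, v i = 0 := by
  classical
  let e : Fin S.card ≃ S := S.equivFin.symm
  let e' : Fin S.card ≃ R := (finCongr hc).trans R.equivFin.symm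
  have hd := hCns S.card (fun x => e x) (fun x => ⟨e' x, hR _ (e' x).2⟩)
    (fun x y h => e.injective (Subtype.ext h))
    (fun x y h => e'.injective (Subtype.ext (by simpa using h)))
  have h0 := Matrix.eq_zero_of_vecMul_eq_zero (v := fun x => v (e x)) hd (by
    funext y
    have h1 := hv (e' y) (e' y).2
    rw [← Finset.sum_coe_sort S, ← Equiv.sum_comp e] at h1
    simp only [Matrix.vecMul, dotProduct, Matrix.submatrix_apply, Pi.zero_apply]
    rw [← h1]
    refine Finset.sum_congr rfl fun x _ => ?_
    rw [mul_comm, ← hC'])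
  intro i hi
  have := congrFun h0 (e.symm ⟨i, hi⟩)
  simpa using this

theorem gd_divmod {r c i c' i' : ℕ} (hi : i ≤ r) (hi' : i' ≤ r)
    (h : c * (r + 1) + i = c' * (r + 1) + i') : c = c' ∧ i = i' := by
  have h1 : c = c' := by
    rcases lt_trichotomy c c' with h1 | h1 | h1
    · nlinarith
    · exact h1
    · nlinarith
  subst h1
  exact ⟨rfl, by omega⟩

end GDHelpers

/-- Graceful degradation of Construction 1: for every `1 ≤ h ≤ a`, the code
`C_{(a,a(r+1)-1,r)}` is an `(h, h(r+1)-1)` streaming code, i.e. it recovers each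
message packet within delay `h(r+1)-1` whenever at most `h` packets are erased
in the corresponding sliding window. -/
theorem construction1_graceful_degradation
    (K : Type) [Field K] [Fintype K] (q a r : ℕ)
    (hq : IsPrimePow q) (ha : 2 ≤ a) (hr : 1 ≤ r)
    (Fsub : ℕ → Subfield K) (hmono : Monotone Fsub)
    (hcard : ∀ j ≤ a - 1, Nat.card (Fsub j) = q ^ 2 ^ (j - 1))
    (htop : Fsub (a - 1) = ⊤)
    (C : Matrix (Fin r) (Fin a) K) (hC : ∀ i j, C i j ∈ Fsub 0)
    (hCns : AllSquareSubmatricesNonsingular C)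
    (α : Fin a → K)
    (hα01 : ∀ j : Fin a, (j : ℕ) ≤ 1 → α j = 1)
    (hαmem : ∀ j : Fin a, 2 ≤ (j : ℕ) → α j ∈ Fsub (j : ℕ) ∧ α j ∉ Fsub ((j : ℕ) - 1))
    :
    ∀ h : ℕ, 1 ≤ h → h ≤ a →
      IsSC (construction1 (gammaMatrix C α)) h (h * (r + 1) - 1) := by
  classical
  intro h h1 hha m m' _ _ t _ E hE htE hEc hpast hwin
  set τ : ℕ := h * (r + 1) - 1 with hτ
  have hτ' : (τ : ℤ) = (h : ℤ) * ((r : ℤ) + 1) - 1 := by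
    have : 1 ≤ h * (r + 1) := Nat.mul_pos (by omega) (by omega)
    rw [hτ, Nat.cast_sub this]; push_cast; ring
  funext i0
  by_contra hcon
  have hi0 : (i0 : ℕ) < r := i0.2
  let C' : Fin r → ℕ → K := fun i j => if hj : j < a then C i ⟨j, hj⟩ else 0
  let α' : ℕ → K := fun j => if hj : j < a then α ⟨j, hj⟩ else 1
  let d : ℤ → Fin r → K := fun s i => m s i - m' s i
  let T : ℕ → ℕ → ℤ := fun c i => t - (i0 : ℕ) + (c : ℤ) * ((r : ℤ) + 1) + (i : ℤ)
  let u : ℕ × Fin r → K := fun s => d (T s.1 s.2) s.2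
  let z : Fin (r + 1 - r) := ⟨0, by omega⟩
  let p : ℕ → K := fun b => (construction1 (gammaMatrix C α)).parity m (T b r) z
    - (construction1 (gammaMatrix C α)).parity m' (T b r) z
  have hdneg : ∀ s < t, ∀ i, d s i = 0 := by
    intro s hs i
    simp only [d]; rw [hpast s hs, sub_self]
  have hp : ∀ b < h, p b = ∑ c ∈ Finset.range (b + 1), ∑ i : Fin r,
      C' i (b - c) * α' (b - c) * u (c, i) := by
    intro b hb
    let f : ℕ → K := fun j => ∑ i : Fin r, C' i j * α' j *
      d (T b r - (r : ℤ) - (j : ℤ) * ((r : ℤ) + 1) + ((i : ℕ) : ℤ)) i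
    have e1 : p b = ∑ j : Fin a, f j := by
      simp only [p, construction1, f, ← Finset.sum_sub_distrib]
      refine Finset.sum_congr rfl fun j _ => Finset.sum_congr rfl fun i _ => ?_
      simp only [gammaMatrix, Matrix.of_apply, C', α', d, j.2, dif_pos]
      ring
    rw [e1, Fin.sum_univ_eq_sum_range f a]
    have e2 : ∑ j ∈ Finset.range (b + 1), f j = ∑ j ∈ Finset.range a, f j := by
      apply Finset.sum_subset
      · intro x hx; rw [Finset.mem_range] at *; omega
      · intro j _ hj
        rw [Finset.mem_range] at hj
        refine Finset.sum_eq_zero fun i _ => ?_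
        rw [hdneg, mul_zero]
        simp only [T]
        have hi : ((i : ℕ) : ℤ) < r := by exact_mod_cast i.2
        have hj' : (b : ℤ) + 1 ≤ j := by exact_mod_cast (by omega : b + 1 ≤ j)
        nlinarith
    rw [← e2, ← Finset.sum_flip]
    refine Finset.sum_congr rfl fun c hc => ?_
    rw [Finset.mem_range] at hc
    refine Finset.sum_congr rfl fun i _ => ?_
    congr 2
    simp only [T]
    rw [Nat.cast_sub (by omega)]
    ring
  have hTinE : ∀ c i : ℕ, c < h → i ≤ r → t ≤ T c i → T c i ∉ E →
      m (T c i) = m' (T c i) ∧ (construction1 (gammaMatrix C α)).parity m (T c i)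
        = (construction1 (gammaMatrix C α)).parity m' (T c i) := by
    intro c i hc hi ht hn
    refine hwin _ ht ?_ hn
    rw [hτ']
    simp only [T]
    have hi' : (i : ℤ) ≤ r := by exact_mod_cast hi
    have hc' : (c : ℤ) + 1 ≤ h := by exact_mod_cast hc
    nlinarith
  have hTinj : ∀ c i c' i' : ℕ, i ≤ r → i' ≤ r → T c i = T c' i' → c = c' ∧ i = i' := by
    intro c i c' i' hi hi' hT
    apply gd_divmod hi hi'
    simp only [T] at hT
    have : (c : ℤ) * ((r : ℤ) + 1) + i = (c' : ℤ) * ((r : ℤ) + 1) + i' := by linarith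
    exact_mod_cast this
  let S0 : Finset (ℕ × Fin r) := (Finset.range h ×ˢ Finset.univ).filter (fun s => u s ≠ 0)
  let B0 : Finset ℕ := (Finset.range h).filter (fun b => p b = 0)
  let P0 : Finset ℕ := (Finset.range h).filter (fun b => ¬ p b = 0)
  have hS0 : ∀ s, s ∈ S0 ↔ s.1 < h ∧ u s ≠ 0 := by
    intro s; simp [S0]
  have hBP : B0.card + P0.card = h := by
    have := Finset.card_filter_add_card_filter_not (s := Finset.range h) (fun b => p b = 0)
    rwa [Finset.card_range] at this
  have hSP : S0.card + P0.card ≤ h := by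
    have c1 : (S0.image (fun s => T s.1 s.2)).card = S0.card := by
      apply Finset.card_image_of_injOn
      intro s _ s' _ hss
      obtain ⟨x1, x2⟩ := hTinj _ _ _ _ s.2.2.le s'.2.2.le hss
      exact Prod.ext x1 (Fin.ext x2)
    have c2 : (P0.image (fun b => T b r)).card = P0.card := by
      apply Finset.card_image_of_injOn
      intro s _ s' _ hss
      exact (hTinj _ _ _ _ le_rfl le_rfl hss).1
    have c3 : Disjoint (S0.image (fun s => T s.1 s.2)) (P0.image (fun b => T b r)) := by
      rw [Finset.disjoint_left]
      intro x hx hx'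
      obtain ⟨s, _, rfl⟩ := Finset.mem_image.1 hx
      obtain ⟨b, _, hb⟩ := Finset.mem_image.1 hx'
      have := (hTinj _ _ _ _ le_rfl s.2.2.le hb).2
      have := s.2.2
      omega
    rw [← c1, ← c2, ← Finset.card_union_of_disjoint c3]
    refine (Finset.card_le_card ?_).trans hEc
    apply Finset.union_subset
    · intro x hx
      obtain ⟨s, hs, rfl⟩ := Finset.mem_image.1 hx
      rw [hS0] at hs
      by_contra hn
      apply hs.2
      by_cases ht : T s.1 s.2 < t
      · exact hdneg _ ht _
      · have := (hTinE s.1 s.2 hs.1 s.2.2.le (by omega) hn).1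
        simp only [u, d]; rw [this, sub_self]
    · intro x hx
      obtain ⟨b, hb, rfl⟩ := Finset.mem_image.1 hx
      simp only [P0, Finset.mem_filter, Finset.mem_range] at hb
      by_contra hn
      apply hb.2
      have := (hTinE b r hb.1 le_rfl (by
        simp only [T]
        have : ((i0 : ℕ) : ℤ) < r := by exact_mod_cast hi0
        nlinarith) hn).2
      simp only [p]; rw [this, sub_self]
  have hSB : S0.card ≤ B0.card := by omega
  have hmem0 : ((0 : ℕ), i0) ∈ S0 := by
    rw [hS0]
    refine ⟨Nat.lt_of_lt_of_le Nat.zero_lt_one h1, ?_⟩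
    simp only [u, d, T]
    simp only [Nat.cast_zero, zero_mul, add_zero, sub_add_cancel]
    exact sub_ne_zero.2 hcon
  let Sg : ℕ → Finset (ℕ × Fin r) := fun g => S0.filter (fun s => s.1 < g)
  let Bg : ℕ → Finset ℕ := fun g => B0.filter (fun b => b < g)
  have hex : ∃ g, 1 ≤ g ∧ (Sg g).card ≤ (Bg g).card := by
    refine ⟨h, h1, ?_⟩
    have e1 : Sg h = S0 := Finset.filter_true_of_mem fun s hs => ((hS0 s).1 hs).1
    have e2 : Bg h = B0 := Finset.filter_true_of_mem fun s hs =>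
      Finset.mem_range.1 (Finset.mem_filter.1 hs).1
    rw [e1, e2]; exact hSB
  obtain ⟨hg1, hgle⟩ := Nat.find_spec hex
  have hgmin := fun k hk => Nat.find_min hex (m := k) hk
  set g := Nat.find hex with hgdef
  have hmemg : ((0 : ℕ), i0) ∈ Sg g := Finset.mem_filter.2 ⟨hmem0, hg1⟩
  have hcardeq : (Sg g).card = (Bg g).card := by
    apply le_antisymm hgle
    by_contra hlt
    push Not at hlt
    have e1 : (Bg g).card ≤ (Bg (g - 1)).card + 1 := by
      have : Bg g ⊆ insert (g - 1) (Bg (g - 1)) := by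
        intro x hx
        simp only [Bg, Finset.mem_filter, Finset.mem_insert] at hx ⊢
        by_cases hxg : x = g - 1
        · exact Or.inl hxg
        · exact Or.inr ⟨hx.1, by omega⟩
      exact (Finset.card_le_card this).trans (Finset.card_insert_le _ _)
    have e2 : (Sg (g - 1)).card ≤ (Sg g).card := by
      apply Finset.card_le_card
      intro x hx
      simp only [Sg, Finset.mem_filter] at hx ⊢
      exact ⟨hx.1, by omega⟩
    have e3 : 0 < (Sg g).card := Finset.card_pos.2 ⟨_, hmemg⟩
    by_cases hg2 : g = 1
    · have e4 : (Bg (g - 1)).card = 0 := by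
        rw [hg2]; simp [Bg]
      omega
    · exact hgmin (g - 1) (by omega) ⟨by omega, by omega⟩
  have hfin := gd_main (a := a) Fsub hmono C' α' (by
      intro i j
      simp only [C']
      split_ifs
      · exact hC _ _
      · exact zero_mem _)
    (gd_minor C hCns C' (by intro i j; simp [C']))
    (by
      intro j hj
      simp only [α']
      split_ifs
      · exact hα01 _ hj
      · rfl)
    (by
      intro j hj
      simp only [α', dif_pos hj]
      by_cases h2 : 2 ≤ j
      · exact (hαmem ⟨j, hj⟩ h2).1
      · rw [hα01 _ (by simp only; omega)]; exact one_mem _)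
    (by
      intro j hj h2
      simp only [α', dif_pos hj]
      exact (hαmem ⟨j, hj⟩ h2).2)
    _ (Sg g) (Bg g) (Bg g) le_rfl
    (by
      intro x hx
      simp only [Bg, B0, Finset.mem_filter, Finset.mem_range] at hx
      omega)
    (Finset.Subset.refl _) hcardeq
    (by
      intro k
      by_cases hk : k + 1 < g
      · have h3 := hgmin (k + 1) hk
        have h4 : ¬ (Sg (k+1)).card ≤ (Bg (k+1)).card := fun h => h3 ⟨by omega, h⟩
        have e1 := Finset.card_filter_add_card_filter_not (s := Sg g) (fun s => k < s.1)
        have e2 := Finset.card_filter_add_card_filter_not (s := Bg g) (fun s => k < s)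
        have e3 : (Sg g).filter (fun s => ¬ k < s.1) = Sg (k + 1) := by
          ext s; simp only [Sg, Finset.mem_filter]
          constructor
          · rintro ⟨⟨x, _⟩, y⟩; exact ⟨x, by omega⟩
          · rintro ⟨x, y⟩; exact ⟨⟨x, by omega⟩, by omega⟩
        have e4 : (Bg g).filter (fun s => ¬ k < s) = Bg (k + 1) := by
          ext s; simp only [Bg, Finset.mem_filter]
          constructor
          · rintro ⟨⟨x, _⟩, y⟩; exact ⟨x, by omega⟩
          · rintro ⟨x, y⟩; exact ⟨⟨x, by omega⟩, by omega⟩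
        rw [e3] at e1
        rw [e4] at e2
        omega
      · rw [Finset.card_eq_zero.2]
        · omega
        · apply Finset.filter_eq_empty_iff.2
          intro s hs hk'
          have := (Finset.mem_filter.1 hs).2
          omega)
    u
    (by
      intro b hb
      have hb' := hb
      simp only [Bg, B0, Finset.mem_filter, Finset.mem_range] at hb'
      obtain ⟨⟨hbh, hpb⟩, hbg⟩ := hb'
      rw [← hpb, hp b hbh]
      rw [← Finset.sum_product' (f := fun c i => C' i (b - c) * α' (b - c) * u (c, i))]
      have e1 : ∀ s ∈ Sg g, gdEnt C' α' (Bg g) b s * u s =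
          if s.1 ≤ b then C' s.2 (b - s.1) * α' (b - s.1) * u s else 0 := by
        intro s _
        unfold gdEnt
        rw [if_pos hb]
        split_ifs
        · rfl
        · rw [zero_mul]
      rw [Finset.sum_congr rfl e1, ← Finset.sum_filter]
      apply Finset.sum_subset
      · intro s hs
        have := (Finset.mem_filter.1 hs).2
        simp only [Finset.mem_product, Finset.mem_range, Finset.mem_univ, and_true]
        omega
      · intro s hs hn
        simp only [Finset.mem_product, Finset.mem_range, Finset.mem_univ, and_true] at hs
        have : u s = 0 := by
          by_contra hu
          apply hn
          simp only [Sg, Finset.mem_filter, hS0]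
          exact ⟨⟨⟨by omega, hu⟩, by omega⟩, by omega⟩
        change _ * u s = 0
        rw [this, mul_zero])
    _ hmemg
  exact ((hS0 _).1 hmem0).2 hfin
end

section
/- Let h be an integer with 1 ≤ h ≤ a and set W = {0,…,hr−1} ∪ {ar,…,ar+h−1}. For every erasure set E ⊆ W with |E| = h and any two codewords x, y ∈ C*_{a,r} satisfying x_j = y_j for all j ∈ W \ E, one has x_i = y_i for all i ∈ E ∩ {0,…,r−1}; i.e., the code symbols with indices in E ∩ {0,…,r−1} are uniquely determined by the code symbols with indices in W \ E alone. -/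
def coefR {K : Type} [Field K] (cf : ℕ → ℕ → K) (al : ℕ → K) (i : ℕ) (c : ℕ × ℕ) : K :=
  if c.1 ≤ i then cf c.2 (i - c.1) * al (i - c.1) else 0

def coefT {K : Type} [Field K] (cf : ℕ → ℕ → K) (b t : ℕ) (c : ℕ × ℕ) : K :=
  if c.1 = b then cf c.2 (t - b) else 0

theorem exists_kernel_subfield {K : Type} [Field K] (F : Subfield K) {κ ι : Type} [Fintype κ]
    [Fintype ι] (A : κ → ι → K) (hA : ∀ k i, A k i ∈ F)
    (hc : Fintype.card κ < Fintype.card ι) :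
    ∃ w : ι → K, (∀ i, w i ∈ F) ∧ w ≠ 0 ∧ ∀ k, ∑ i, A k i * w i = 0 := by
  classical
  let B : Matrix κ ι F := Matrix.of fun k i => ⟨A k i, hA k i⟩
  have hk : LinearMap.ker (Matrix.mulVecLin B) ≠ ⊥ := by
    apply LinearMap.ker_ne_bot_of_finrank_lt
    simpa using hc
  obtain ⟨w, hw, hw0⟩ := (Submodule.ne_bot_iff _).1 hk
  refine ⟨fun i => (w i : K), fun i => (w i).2, ?_, ?_⟩
  · intro h0
    apply hw0
    funext i
    have := congrFun h0 i
    exact Subtype.ext (by simpa using this)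
  · intro k
    have h1 : (Matrix.mulVec B w) k = 0 := by
      have : Matrix.mulVecLin B w = 0 := hw
      rw [Matrix.mulVecLin_apply] at this
      rw [this]; rfl
    have h2 := congrArg (fun y : F => (y : K)) h1
    simpa [Matrix.mulVec, dotProduct, B] using h2

theorem core_step {K : Type} [Field K] (S : Finset (ℕ × ℕ)) (R T : Finset ℕ)
    (cR cT : ℕ → ℕ × ℕ → K) (u v : ℕ × ℕ → K) (F : Subfield K) (β : K) (hβ : β ∉ F)
    (hcR : ∀ i ∈ R, ∀ c ∈ S, cR i c ∈ F) (hcT : ∀ i ∈ T, ∀ c ∈ S, cT i c ∈ F)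
    (hu : ∀ c ∈ S, u c ∈ F) (hv : ∀ c ∈ S, v c ∈ F)
    (hcard : R.card + T.card + 1 = S.card)
    (IH : ∀ z : ℕ × ℕ → K, (∀ i ∈ R, ∑ c ∈ S, cR i c * z c = 0) →
      (∀ t ∈ T, ∑ c ∈ S, cT t c * z c = 0) → ∑ c ∈ S, u c * z c = 0 → ∀ c ∈ S, z c = 0)
    (z : ℕ × ℕ → K) (hR : ∀ i ∈ R, ∑ c ∈ S, cR i c * z c = 0)
    (hT : ∀ t ∈ T, ∑ c ∈ S, cT t c * z c = 0)
    (hn : ∑ c ∈ S, (u c * β + v c) * z c = 0) : ∀ c ∈ S, z c = 0 := by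
  classical
  obtain ⟨w0, hwF, hw0, hwk⟩ := exists_kernel_subfield F (κ := R ⊕ T) (ι := S)
    (fun k c => Sum.elim (fun i : R => cR i c) (fun i : T => cT i c) k)
    (by
      rintro (i | i) c
      · exact hcR i i.2 c c.2
      · exact hcT i i.2 c c.2)
    (by simp; omega)
  let w : ℕ × ℕ → K := fun c => if hc : c ∈ S then w0 ⟨c, hc⟩ else 0
  have hsum : ∀ f : ℕ × ℕ → K, ∑ c ∈ S, f c * w c = ∑ c : S, f c * w0 c := by
    intro f
    rw [← Finset.sum_coe_sort]
    apply Finset.sum_congr rfl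
    intro c _
    simp [w]
  have hwR : ∀ i ∈ R, ∑ c ∈ S, cR i c * w c = 0 := by
    intro i hi
    rw [hsum]
    exact hwk (Sum.inl ⟨i, hi⟩)
  have hwT : ∀ i ∈ T, ∑ c ∈ S, cT i c * w c = 0 := by
    intro i hi
    rw [hsum]
    exact hwk (Sum.inr ⟨i, hi⟩)
  have hwm : ∀ c, w c ∈ F := by
    intro c
    simp only [w]
    split_ifs
    · exact hwF _
    · exact F.zero_mem
  set U := ∑ c ∈ S, u c * w c with hU
  set V := ∑ c ∈ S, v c * w c with hV
  have hUF : U ∈ F := F.sum_mem fun c hc => F.mul_mem (hu c hc) (hwm c)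
  have hVF : V ∈ F := F.sum_mem fun c hc => F.mul_mem (hv c hc) (hwm c)
  have hU0 : U ≠ 0 := by
    intro h0
    apply hw0
    funext c
    have := IH w hwR hwT h0 c c.2
    simpa [w] using this
  set Z := ∑ c ∈ S, u c * z c with hZ
  have hlin : ∀ (f : ℕ × ℕ → K) (d : K), ∑ c ∈ S, f c * (z c - d * w c) =
      ∑ c ∈ S, f c * z c - d * ∑ c ∈ S, f c * w c := by
    intro f d
    rw [Finset.mul_sum, ← Finset.sum_sub_distrib]
    exact Finset.sum_congr rfl fun c _ => by ring
  have hz : ∀ c ∈ S, z c - Z / U * w c = 0 := by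
    apply IH (fun c => z c - Z / U * w c)
    · intro i hi
      rw [hlin, hR i hi, hwR i hi]; simp
    · intro i hi
      rw [hlin, hT i hi, hwT i hi]; simp
    · rw [hlin, ← hU, ← hZ]; field_simp; simp
  have hsub : ∑ c ∈ S, (u c * β + v c) * z c = Z / U * (U * β + V) := by
    rw [hU, hV, Finset.sum_mul, ← Finset.sum_add_distrib, Finset.mul_sum]
    refine Finset.sum_congr rfl fun c hc => ?_
    rw [sub_eq_zero.1 (hz c hc)]; ring
  have hne : U * β + V ≠ 0 := by
    intro h0
    apply hβ
    have : β = -V / U := by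
      field_simp
      linear_combination h0
    rw [this]
    exact F.div_mem (F.neg_mem hVF) hUF
  rw [hsub] at hn
  have hd : Z / U = 0 := (mul_eq_zero.1 hn).resolve_right hne
  intro c hc
  have := hz c hc
  rw [hd] at this
  simpa using this

theorem core_main {K : Type} [Field K] (a r : ℕ) (cf : ℕ → ℕ → K) (al : ℕ → K)
    (Fs : ℕ → Subfield K) (hmono : Monotone Fs)
    (hcf : ∀ m < r, ∀ k < a, cf m k ∈ Fs 0)
    (hal1 : ∀ k < a, k ≤ 1 → al k = 1)
    (hal : ∀ k < a, al k ∈ Fs k)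
    (haln : ∀ k < a, 2 ≤ k → al k ∉ Fs (k - 1))
    (hM : ∀ X Y : Finset ℕ, (∀ m ∈ X, m < r) → (∀ t ∈ Y, t < a) → X.card = Y.card →
      ∀ w : ℕ → K, (∀ t ∈ Y, ∑ m ∈ X, cf m t * w m = 0) → ∀ m ∈ X, w m = 0) :
    ∀ (N : ℕ) (S : Finset (ℕ × ℕ)) (R T : Finset ℕ) (b : ℕ), S.card + R.card ≤ N →
      (∀ c ∈ S, c.2 < r) → (∀ c ∈ S, b ≤ c.1) → (∃ c ∈ S, c.1 = b) →
      (∀ i ∈ R, i < a) → (∀ t ∈ T, b ≤ t ∧ t < a) → (∀ i ∈ R, ∀ t ∈ T, i < t) →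
      S.card = R.card + T.card → T.card ≤ (S.filter (fun c => c.1 = b)).card →
      (∀ i ∈ R, T.card + (R.filter (fun i' => i' ≤ i)).card ≤
        (S.filter (fun c => c.1 ≤ i)).card) →
      ∀ z : ℕ × ℕ → K, (∀ i ∈ R, ∑ c ∈ S, coefR cf al i c * z c = 0) →
        (∀ t ∈ T, ∑ c ∈ S, coefT cf b t c * z c = 0) → ∀ c ∈ S, z c = 0 := by
  classical
  intro N
  induction N with
  | zero =>
    intro S R T b hN _ _ _ _ _ _ _ _ _ z _ _ c hc
    have : 0 < S.card := Finset.card_pos.2 ⟨c, hc⟩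
    omega
  | succ N ih =>
    intro S R T b hN hSr hSb hbS hRa hTa hRT hcard hTb hw z hzR hzT
    have ih0 : ∀ (S : Finset (ℕ × ℕ)) (R : Finset ℕ), S.card + R.card ≤ N →
        (∀ c ∈ S, c.2 < r) → (∀ i ∈ R, i < a) → S.card = R.card →
        (∀ i ∈ R, (R.filter (fun i' => i' ≤ i)).card ≤ (S.filter (fun c => c.1 ≤ i)).card) →
        (∀ i ∈ R, ∑ c ∈ S, coefR cf al i c * z c = 0) → ∀ c ∈ S, z c = 0 := by
      intro S R hN hSr hRa hcard hw hz
      rcases S.eq_empty_or_nonempty with rfl | hne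
      · simp
      obtain ⟨c0, hc0, hmin⟩ := Finset.exists_min_image S (fun c => c.1) hne
      exact ih S R ∅ c0.1 hN hSr hmin ⟨c0, hc0, rfl⟩ hRa (by simp) (by simp) (by simpa using hcard)
        (by simp) (by simpa using hw) z hz (by simp)
    have hRb : ∀ i ∈ R, b ≤ i := by
      intro i hi
      have h1 := hw i hi
      have h2 : 0 < (R.filter (fun i' => i' ≤ i)).card :=
        Finset.card_pos.2 ⟨i, by simp [hi]⟩
      obtain ⟨c, hc⟩ := Finset.card_pos.1 (show 0 < (S.filter (fun c => c.1 ≤ i)).card by omega)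
      rw [Finset.mem_filter] at hc
      exact (hSb c hc.1).trans hc.2
    -- block-b cards
    have hbpos : 0 < (S.filter (fun c => c.1 = b)).card := by
      obtain ⟨c, hc, hcb⟩ := hbS
      exact Finset.card_pos.2 ⟨c, by simp [hc, hcb]⟩
    have splitle : ∀ (S : Finset (ℕ × ℕ)) (i : ℕ),
        (S.filter (fun c => c.1 ≤ i)).card + (S.filter (fun c => i < c.1)).card = S.card := by
      intro S i
      rw [← Finset.card_filter_add_card_filter_not (s := S) (fun c => c.1 ≤ i)]
      simp
    have splitleR : ∀ (R : Finset ℕ) (i : ℕ),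
        (R.filter (fun c => c ≤ i)).card + (R.filter (fun c => i < c)).card = R.card := by
      intro R i
      rw [← Finset.card_filter_add_card_filter_not (s := R) (fun c => c ≤ i)]
      simp
    have hfb : S.filter (fun c => c.1 ≤ b) = S.filter (fun c => c.1 = b) := by
      apply Finset.filter_congr
      intro c hc
      have := hSb c hc
      omega
    -- continuation after vanishing below a level
    have cont : ∀ i : ℕ, (∀ c ∈ S, c.1 ≤ i → z c = 0) →
        ∀ R2 : Finset ℕ, R2 ⊆ R → (S.filter (fun c => i < c.1)).card + R2.card ≤ N →
        (S.filter (fun c => i < c.1)).card = R2.card →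
        (∀ j ∈ R2, i ≤ j ∧ (R2.filter (fun i' => i' ≤ j)).card + (S.filter (fun c => c.1 ≤ i)).card
          ≤ (S.filter (fun c => c.1 ≤ j)).card) → ∀ c ∈ S, z c = 0 := by
      intro i h0 R2 hR2 hN2 hc2 hw2
      have key := ih0 (S.filter (fun c => i < c.1)) R2 hN2
        (fun c hc => hSr c (Finset.mem_filter.1 hc).1) (fun j hj => hRa j (hR2 hj)) hc2
        (by
          intro j hj
          obtain ⟨h1, h2⟩ := hw2 j hj
          have h3 := splitle (S.filter (fun c => c.1 ≤ j)) i
          rw [Finset.filter_filter, Finset.filter_filter] at h3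
          rw [Finset.filter_filter]
          have e1 : S.filter (fun c => c.1 ≤ j ∧ c.1 ≤ i) = S.filter (fun c => c.1 ≤ i) :=
            Finset.filter_congr fun c _ => by omega
          have e2 : S.filter (fun c => c.1 ≤ j ∧ i < c.1) = S.filter (fun c => i < c.1 ∧ c.1 ≤ j) :=
            Finset.filter_congr fun c _ => by omega
          rw [e1, e2] at h3
          omega)
        (by
          intro j hj
          rw [← hzR j (hR2 hj)]
          apply Finset.sum_filter_of_ne
          intro c hc hne
          by_contra hlt
          exact hne (by rw [h0 c hc (by omega), mul_zero]))
      intro c hc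
      by_cases hci : c.1 ≤ i
      · exact h0 c hc hci
      · exact key c (Finset.mem_filter.2 ⟨hc, by omega⟩)
    rcases Nat.lt_or_ge T.card (S.filter (fun c => c.1 = b)).card with hlt | hge
    · -- p < e_b
      have hRne : R.Nonempty := by
        rw [← Finset.card_pos]
        have := Finset.card_filter_le S (fun c => c.1 = b)
        omega
      obtain ⟨n, hnR, hnmax⟩ := Finset.exists_max_image R id hRne
      simp only [id] at hnmax
      by_cases hsplit : ∃ i ∈ R, i < n ∧
          (S.filter (fun c => c.1 ≤ i)).card ≤ T.card + (R.filter (fun i' => i' ≤ i)).card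
      · obtain ⟨i, hiR, hin, hle⟩ := hsplit
        have heq := le_antisymm hle (hw i hiR)
        have hS1 := splitle S i
        have hR1 := splitleR R i
        have hpos : 0 < (R.filter (fun c => i < c)).card :=
          Finset.card_pos.2 ⟨n, by simp [hnR, hin]⟩
        have hbi := hRb i hiR
        have first : ∀ c ∈ S.filter (fun c => c.1 ≤ i), z c = 0 := by
          apply ih (S.filter (fun c => c.1 ≤ i)) (R.filter (fun c => c ≤ i)) T b (by omega)
            (fun c hc => hSr c (Finset.mem_filter.1 hc).1)
            (fun c hc => hSb c (Finset.mem_filter.1 hc).1)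
            (by
              obtain ⟨c, hc, hcb⟩ := hbS
              exact ⟨c, by simp [hc]; omega, hcb⟩)
            (fun j hj => hRa j (Finset.mem_filter.1 hj).1) hTa
            (fun j hj => hRT j (Finset.mem_filter.1 hj).1) (by omega)
          · rw [Finset.filter_filter]
            have e1 : S.filter (fun c => c.1 ≤ i ∧ c.1 = b) = S.filter (fun c => c.1 = b) :=
              Finset.filter_congr fun c _ => by omega
            rw [e1]; exact hTb
          · intro j hj
            rw [Finset.mem_filter] at hj
            rw [Finset.filter_filter, Finset.filter_filter]
            have e1 : S.filter (fun c => c.1 ≤ i ∧ c.1 ≤ j) = S.filter (fun c => c.1 ≤ j) :=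
              Finset.filter_congr fun c _ => by omega
            have e2 : R.filter (fun c => c ≤ i ∧ c ≤ j) = R.filter (fun c => c ≤ j) :=
              Finset.filter_congr fun c _ => by omega
            rw [e1, e2]; exact hw j hj.1
          · intro j hj
            rw [Finset.mem_filter] at hj
            rw [← hzR j hj.1]
            apply Finset.sum_filter_of_ne
            intro c hc hne
            by_contra hlt
            exact hne (by rw [coefR, if_neg (by omega), zero_mul])
          · intro t ht
            rw [← hzT t ht]
            apply Finset.sum_filter_of_ne
            intro c hc hne
            by_contra hlt
            exact hne (by rw [coefT, if_neg (by omega), zero_mul])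
        have hp1 : 0 < (R.filter (fun c => c ≤ i)).card := Finset.card_pos.2 ⟨i, by simp [hiR]⟩
        apply cont i (fun c hc h => first c (Finset.mem_filter.2 ⟨hc, h⟩))
          (R.filter (fun c => i < c)) (Finset.filter_subset _ _) (by omega) (by omega)
        intro j hj
        rw [Finset.mem_filter] at hj
        refine ⟨hj.2.le, ?_⟩
        have h3 := splitleR (R.filter (fun c => c ≤ j)) i
        rw [Finset.filter_filter, Finset.filter_filter] at h3
        rw [Finset.filter_filter]
        have e1 : R.filter (fun c => c ≤ j ∧ c ≤ i) = R.filter (fun c => c ≤ i) :=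
          Finset.filter_congr fun c _ => by omega
        have e2 : R.filter (fun c => c ≤ j ∧ i < c) = R.filter (fun c => i < c ∧ c ≤ j) :=
          Finset.filter_congr fun c _ => by omega
        rw [e1, e2] at h3
        have := hw j hj.1
        omega
      · push Not at hsplit
        have hnT : n ∉ T := fun h => lt_irrefl _ (hRT n hnR n h)
        have hRe : (R.erase n).card + 1 = R.card := Finset.card_erase_add_one hnR
        have hTi : (insert n T).card = T.card + 1 := Finset.card_insert_of_notMem hnT
        have hbn := hRb n hnR
        have hna := hRa n hnR
        have IH : ∀ z : ℕ × ℕ → K, (∀ i ∈ R.erase n, ∑ c ∈ S, coefR cf al i c * z c = 0) →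
            (∀ t ∈ T, ∑ c ∈ S, coefT cf b t c * z c = 0) →
            ∑ c ∈ S, coefT cf b n c * z c = 0 → ∀ c ∈ S, z c = 0 := by
          intro z h1 h2 h3
          apply ih S (R.erase n) (insert n T) b (by omega) hSr hSb hbS
            (fun i hi => hRa i (Finset.mem_of_mem_erase hi))
            (by
              intro t ht
              rcases Finset.mem_insert.1 ht with rfl | ht
              · exact ⟨hbn, hna⟩
              · exact hTa t ht)
            (by
              intro i hi t ht
              have hi' := Finset.mem_erase.1 hi
              rcases Finset.mem_insert.1 ht with rfl | ht
              · exact lt_of_le_of_ne (hnmax i hi'.2) hi'.1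
              · exact hRT i hi'.2 t ht)
            (by omega) (by omega) _ z h1
            (by
              intro t ht
              rcases Finset.mem_insert.1 ht with rfl | ht
              · exact h3
              · exact h2 t ht)
          intro i hi
          have hi' := Finset.mem_erase.1 hi
          have h4 := hsplit i hi'.2 (lt_of_le_of_ne (hnmax i hi'.2) hi'.1)
          have h5 : ((R.erase n).filter (fun i' => i' ≤ i)).card ≤
              (R.filter (fun i' => i' ≤ i)).card :=
            Finset.card_le_card (Finset.filter_subset_filter _ (Finset.erase_subset _ _))
          omega
        rcases Nat.lt_or_ge (n - b) 2 with hs | hs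
        · -- all columns in block b
          have hall : ∀ c ∈ S, c.1 = b := by
            have hc : S.card ≤ (S.filter (fun c => c.1 = b)).card := by
              by_cases hb : b ∈ R
              · by_cases hbn' : b = n
                · have h1 := hw b hb
                  have : R.filter (fun i' => i' ≤ b) = R :=
                    Finset.filter_true_of_mem fun i hi => by have := hnmax i hi; omega
                  rw [this, hfb] at h1
                  omega
                · have h1 := hsplit b hb (by omega)
                  rw [hfb] at h1
                  have : R.erase n ⊆ R.filter (fun i' => i' ≤ b) := by
                    intro i hi
                    have hi' := Finset.mem_erase.1 hi
                    have := hnmax i hi'.2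
                    exact Finset.mem_filter.2 ⟨hi'.2, by omega⟩
                  have := Finset.card_le_card this
                  omega
              · have : R ⊆ {n} := by
                  intro i hi
                  have h1 := hnmax i hi
                  have h2 := hRb i hi
                  have h3 : i ≠ b := fun h => hb (h ▸ hi)
                  rw [Finset.mem_singleton]
                  omega
                have := Finset.card_le_card this
                rw [Finset.card_singleton] at this
                omega
            have := Finset.eq_of_subset_of_card_le (Finset.filter_subset (fun c => c.1 = b) S) hc
            intro c hc
            rw [← this] at hc
            exact (Finset.mem_filter.1 hc).2
          apply IH z (fun i hi => hzR i (Finset.mem_of_mem_erase hi)) hzT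
          rw [← hzR n hnR]
          refine Finset.sum_congr rfl fun c hc => ?_
          have := hall c hc
          rw [coefT, if_pos this, coefR, if_pos (by omega), this, hal1 (n - b) (by omega) (by omega),
            mul_one]
        · have hF0 : ∀ m < r, ∀ k < a, cf m k ∈ Fs (n - b - 1) := fun m hm k hk =>
            hmono (Nat.zero_le _) (hcf m hm k hk)
          refine core_step S (R.erase n) T (coefR cf al) (coefT cf b) (coefT cf b n)
            (fun c => if c.1 = b then 0 else coefR cf al n c) (Fs (n - b - 1)) (al (n - b))
            (haln _ (by omega) hs) ?_ ?_ ?_ ?_ (by omega) IH z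
            (fun i hi => hzR i (Finset.mem_of_mem_erase hi)) hzT ?_
          · intro i hi c hc
            have hi' := Finset.mem_erase.1 hi
            have h1 := hnmax i hi'.2
            have h2 := hSb c hc
            have h3 := hi'.1
            rw [coefR]
            split_ifs
            · exact Subfield.mul_mem _ (hF0 _ (hSr c hc) _ (by omega))
                (hmono (show i - c.1 ≤ n - b - 1 by omega) (hal _ (by omega)))
            · exact Subfield.zero_mem _
          · intro t ht c hc
            have := hTa t ht
            rw [coefT]
            split_ifs
            · exact hF0 _ (hSr c hc) _ (by omega)
            · exact Subfield.zero_mem _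
          · intro c hc
            rw [coefT]
            split_ifs
            · exact hF0 _ (hSr c hc) _ (by omega)
            · exact Subfield.zero_mem _
          · intro c hc
            have h2 := hSb c hc
            simp only [coefR]
            split_ifs
            · exact Subfield.zero_mem _
            · exact Subfield.mul_mem _ (hF0 _ (hSr c hc) _ (by omega))
                (hmono (show n - c.1 ≤ n - b - 1 by omega) (hal _ (by omega)))
            · exact Subfield.zero_mem _
          · refine Eq.trans (Finset.sum_congr rfl fun c hc => ?_) (hzR n hnR)
            congr 1
            by_cases hcb : c.1 = b
            · simp [coefT, coefR, hcb, hbn]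
            · simp [coefT, hcb]
    · -- p = e_b
      have heq := le_antisymm hTb hge
      have hS1 := splitle S b
      have hX : ((S.filter (fun c => c.1 = b)).image Prod.snd).card =
          (S.filter (fun c => c.1 = b)).card := by
        apply Finset.card_image_of_injOn
        intro c hc d hd hcd
        simp only [Finset.coe_filter, Set.mem_ofPred_eq] at hc hd
        exact Prod.ext (by rw [hc.2, hd.2]) hcd
      have hinj : Set.InjOn (fun t => t - b) (T : Set ℕ) := by
        intro t ht s hs hts
        have h1 := hTa t ht
        have h2 := hTa s hs
        simp only at hts
        omega
      have hY : (T.image (fun t => t - b)).card = T.card := Finset.card_image_of_injOn hinj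
      have key := hM ((S.filter (fun c => c.1 = b)).image Prod.snd) (T.image (fun t => t - b))
        (by
          intro m hm
          obtain ⟨c, hc, rfl⟩ := Finset.mem_image.1 hm
          exact hSr c (Finset.mem_filter.1 hc).1)
        (by
          intro m hm
          obtain ⟨t, ht, rfl⟩ := Finset.mem_image.1 hm
          have := hTa t ht
          omega)
        (by omega) (fun m => z (b, m))
        (by
          intro m hm
          obtain ⟨t, ht, rfl⟩ := Finset.mem_image.1 hm
          rw [Finset.sum_image (Finset.card_image_iff.1 hX), Finset.sum_filter]
          refine Eq.trans (Finset.sum_congr rfl fun c hc => ?_) (hzT t ht)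
          rw [coefT]
          split_ifs with h
          · rw [← h]
          · simp)
      have h0 : ∀ c ∈ S, c.1 ≤ b → z c = 0 := by
        intro c hc hcb
        have hcb' : c.1 = b := le_antisymm hcb (hSb c hc)
        have := key c.2 (Finset.mem_image.2 ⟨c, by simp [hc, hcb'], rfl⟩)
        rw [← hcb'] at this
        exact this
      rw [hfb] at hS1
      apply cont b h0 R (Finset.Subset.refl _) (by omega) (by omega)
      intro j hj
      refine ⟨hRb j hj, ?_⟩
      rw [hfb]
      have := hw j hj
      omega


theorem mds_kernel {K : Type} [Field K] {r a : ℕ} (C : Matrix (Fin r) (Fin a) K)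
    (hCns : AllSquareSubmatricesNonsingular C) (cf : ℕ → ℕ → K)
    (hcf : ∀ (m : Fin r) (k : Fin a), cf m k = C m k)
    (X Y : Finset ℕ) (hX : ∀ m ∈ X, m < r) (hY : ∀ t ∈ Y, t < a) (hXY : X.card = Y.card)
    (w : ℕ → K) (hw : ∀ t ∈ Y, ∑ m ∈ X, cf m t * w m = 0) : ∀ m ∈ X, w m = 0 := by
  classical
  let eX := X.equivFin
  let eY := Y.equivFinOfCardEq hXY.symm
  let ρ : Fin X.card → Fin r := fun i => ⟨(eX.symm i : ℕ), hX _ (eX.symm i).2⟩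
  let σ : Fin X.card → Fin a := fun i => ⟨(eY.symm i : ℕ), hY _ (eY.symm i).2⟩
  have hρ : Function.Injective ρ := by
    intro i j hij
    have : (eX.symm i : ℕ) = eX.symm j := congrArg Fin.val hij
    exact eX.symm.injective (Subtype.ext this)
  have hσ : Function.Injective σ := by
    intro i j hij
    have : (eY.symm i : ℕ) = eY.symm j := congrArg Fin.val hij
    exact eY.symm.injective (Subtype.ext this)
  have hdet := hCns X.card ρ σ hρ hσ
  have hz : Matrix.vecMul (fun i => w (eX.symm i : ℕ)) (C.submatrix ρ σ) = 0 := by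
    funext k
    have h1 := hw (eY.symm k : ℕ) (eY.symm k).2
    rw [← Finset.sum_coe_sort, ← Equiv.sum_comp eX.symm] at h1
    simp only [Matrix.vecMul, dotProduct, Matrix.submatrix_apply, Pi.zero_apply]
    refine Eq.trans (Finset.sum_congr rfl fun i _ => ?_) h1
    rw [← hcf]
    simp only [ρ, σ]
    ring
  have h0 := Matrix.eq_zero_of_vecMul_eq_zero hdet hz
  intro m hm
  have := congrFun h0 (eX ⟨m, hm⟩)
  simpa using this

/-- Punctured erasure recovery for `C*_{a,r}`: with
`W = {0,…,hr-1} ∪ {ar,…,ar+h-1}`, for any erasure set `E ⊆ W` with `|E| = h`,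
the code symbols with indices in `E ∩ {0,…,r-1}` are uniquely determined by the
code symbols indexed by `W \ E` alone. -/
theorem starCode_punctured_recovery
    (K : Type) [Field K] [Fintype K] (q a r : ℕ)
    (hq : IsPrimePow q) (ha : 2 ≤ a) (hr : 1 ≤ r)
    (Fsub : ℕ → Subfield K) (hmono : Monotone Fsub)
    (hcard : ∀ j ≤ a - 1, Nat.card (Fsub j) = q ^ 2 ^ (j - 1))
    (htop : Fsub (a - 1) = ⊤)
    (C : Matrix (Fin r) (Fin a) K) (hC : ∀ i j, C i j ∈ Fsub 0)
    (hCns : AllSquareSubmatricesNonsingular C)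
    (α : Fin a → K)
    (hα01 : ∀ j : Fin a, (j : ℕ) ≤ 1 → α j = 1)
    (hαmem : ∀ j : Fin a, 2 ≤ (j : ℕ) → α j ∈ Fsub (j : ℕ) ∧ α j ∉ Fsub ((j : ℕ) - 1))
    (h : ℕ) (hh1 : 1 ≤ h) (hha : h ≤ a)
    (E : Finset (Fin (a * (r + 1)))) (hEcard : E.card = h)
    (hEW : ∀ j ∈ E, (j : ℕ) < h * r ∨ (a * r ≤ (j : ℕ) ∧ (j : ℕ) < a * r + h)) :
    ∀ x y : Fin (a * (r + 1)) → K,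
      x ∈ starCode (gammaMatrix C α) → y ∈ starCode (gammaMatrix C α) →
      (∀ j : Fin (a * (r + 1)),
        ((j : ℕ) < h * r ∨ (a * r ≤ (j : ℕ) ∧ (j : ℕ) < a * r + h)) → j ∉ E →
        x j = y j) →
      ∀ i ∈ E, (i : ℕ) < r → x i = y i := by
  classical
  intro x y hx hy hxy i0 hi0E hi0r
  -- the functions used in the core lemma
  let cf : ℕ → ℕ → K := fun m k => if hm : m < r then if hk : k < a then C ⟨m, hm⟩ ⟨k, hk⟩ else 0 else 0
  let al : ℕ → K := fun k => if hk : k < a then α ⟨k, hk⟩ else 0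
  have hcf : ∀ (m : Fin r) (k : Fin a), cf m k = C m k := by
    intro m k
    simp [cf]
  -- counting
  let NN : ℕ → ℕ := fun k => (E.filter (fun c : Fin (a * (r + 1)) => (c : ℕ) < k * r)).card
  let FF : ℕ → Finset ℕ := fun k => (Finset.range k).filter (fun i => ∃ c ∈ E, (c : ℕ) = a * r + i)
  let GG : ℕ → Finset ℕ := fun k => (Finset.range k).filter (fun i => ¬ ∃ c ∈ E, (c : ℕ) = a * r + i)
  have hFG : ∀ k, (FF k).card + (GG k).card = k := by
    intro k
    have h1 := Finset.card_filter_add_card_filter_not (s := Finset.range k)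
      (fun i => ∃ c ∈ E, (c : ℕ) = a * r + i)
    rw [Finset.card_range] at h1
    exact h1
  have hNmono : ∀ k l, k ≤ l → NN k ≤ NN l := by
    intro k l hkl
    apply Finset.card_le_card
    intro c hc
    rw [Finset.mem_filter] at hc ⊢
    exact ⟨hc.1, lt_of_lt_of_le hc.2 (Nat.mul_le_mul_right r hkl)⟩
  have hFmono : ∀ k l, k ≤ l → (FF k).card ≤ (FF l).card := by
    intro k l hkl
    apply Finset.card_le_card
    exact Finset.filter_subset_filter _ (Finset.range_mono hkl)
  have hDh : NN h + (FF h).card ≤ h := by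
    have h1 : (FF h).card ≤ (E.filter (fun c : Fin (a * (r + 1)) => ¬ (c : ℕ) < h * r)).card := by
      have : FF h ⊆ (E.filter (fun c : Fin (a * (r + 1)) => ¬ (c : ℕ) < h * r)).image (fun c : Fin (a * (r + 1)) => (c : ℕ) - a * r) := by
        intro i hi
        obtain ⟨_, c, hc, hci⟩ := Finset.mem_filter.1 hi
        have := Nat.mul_le_mul_right r hha
        exact Finset.mem_image.2 ⟨c, Finset.mem_filter.2 ⟨hc, by omega⟩, by omega⟩
      exact (Finset.card_le_card this).trans Finset.card_image_le
    have h2 := Finset.card_filter_add_card_filter_not (s := E) (fun c : Fin (a * (r + 1)) => (c : ℕ) < h * r)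
    simp only [NN]
    omega
  have hex : ∃ k, 1 ≤ k ∧ NN k + (FF k).card ≤ k := ⟨h, hh1, hDh⟩
  obtain ⟨k, ⟨hk1, hkD⟩, hkmin⟩ : ∃ k, (1 ≤ k ∧ NN k + (FF k).card ≤ k) ∧
      ∀ l < k, ¬ (1 ≤ l ∧ NN l + (FF l).card ≤ l) :=
    ⟨Nat.find hex, Nat.find_spec hex, fun l hl => Nat.find_min hex hl⟩
  have hkh : k ≤ h := by
    by_contra hlt
    exact hkmin h (by omega) ⟨hh1, hDh⟩
  have hN1 : 1 ≤ NN 1 := Finset.card_pos.2 ⟨i0, Finset.mem_filter.2 ⟨hi0E, by omega⟩⟩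
  have hkeq : NN k + (FF k).card = k := by
    apply le_antisymm hkD
    rcases Nat.lt_or_ge 1 k with h1 | h1
    · have h2 := hkmin (k - 1) (by omega)
      have h3 := hNmono (k - 1) k (by omega)
      have h4 := hFmono (k - 1) k (by omega)
      omega
    · have : k = 1 := by omega
      subst this
      omega
  have hkr : k * r ≤ a * r := Nat.mul_le_mul_right r (hkh.trans hha)
  have hkhr : k * r ≤ h * r := Nat.mul_le_mul_right r hkh
  have har : a * r ≤ a * (r + 1) := Nat.mul_le_mul_left a (Nat.le_succ r)
  -- the column set
  let φ : Fin (a * (r + 1)) → ℕ × ℕ := fun c => ((c : ℕ) / r, (c : ℕ) % r)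
  have hφ : Function.Injective φ := by
    intro c d hcd
    have h1 : (c : ℕ) / r = (d : ℕ) / r := congrArg Prod.fst hcd
    have h2 : (c : ℕ) % r = (d : ℕ) % r := congrArg Prod.snd hcd
    apply Fin.ext
    rw [← Nat.div_add_mod (c : ℕ) r, ← Nat.div_add_mod (d : ℕ) r, h1, h2]
  let E' := E.filter (fun c : Fin (a * (r + 1)) => (c : ℕ) < k * r)
  let S : Finset (ℕ × ℕ) := E'.image φ
  let zz : ℕ × ℕ → K := fun c => if hc : c.1 * r + c.2 < a * (r + 1) then x ⟨_, hc⟩ - y ⟨_, hc⟩ else 0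
  have hzz : ∀ c, zz (φ c) = x c - y c := by
    intro c
    have : (c : ℕ) / r * r + (c : ℕ) % r = c := Nat.div_add_mod' _ _
    simp only [zz, φ, this, c.isLt, dif_pos]
  have hScard : S.card = NN k := Finset.card_image_of_injective _ hφ
  have hfilt : ∀ i < k, (S.filter (fun c => c.1 ≤ i)).card = NN (i + 1) := by
    intro i hi
    have : S.filter (fun c => c.1 ≤ i) = (E.filter (fun c : Fin (a * (r + 1)) => (c : ℕ) < (i + 1) * r)).image φ := by
      simp only [S, E', Finset.filter_image, Finset.filter_filter]
      congr 1
      apply Finset.filter_congr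
      intro c _
      simp only [φ]
      rw [← Nat.lt_succ_iff, Nat.succ_eq_add_one, Nat.div_lt_iff_lt_mul (by omega)]
      have := Nat.mul_le_mul_right r (show i + 1 ≤ k by omega)
      omega
    rw [this, Finset.card_image_of_injective _ hφ]
  have hi0E' : i0 ∈ E' := Finset.mem_filter.2 ⟨hi0E, by
    have := Nat.mul_le_mul_right r hk1
    omega⟩
  have hal : ∀ l < a, al l ∈ Fsub l := by
    intro l hl
    simp only [al, hl, dif_pos]
    rcases Nat.lt_or_ge l 2 with h2 | h2
    · rw [hα01 ⟨l, hl⟩ (by simp only; omega)]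
      exact Subfield.one_mem _
    · exact (hαmem ⟨l, hl⟩ h2).1
  have key := core_main a r cf al Fsub hmono
    (by
      intro m hm l hl
      simp only [cf, hm, hl, dif_pos]
      exact hC _ _)
    (by
      intro l hl h1
      simp only [al, hl, dif_pos]
      exact hα01 ⟨l, hl⟩ h1)
    hal
    (by
      intro l hl h2
      simp only [al, hl, dif_pos]
      exact (hαmem ⟨l, hl⟩ h2).2)
    (fun X Y hX hY hXY w hw => mds_kernel C hCns cf hcf X Y hX hY hXY w hw)
    (S.card + (GG k).card) S (GG k) ∅ 0 le_rfl
    (by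
      intro c hc
      obtain ⟨d, _, rfl⟩ := Finset.mem_image.1 hc
      exact Nat.mod_lt _ (by omega))
    (fun _ _ => Nat.zero_le _)
    ⟨φ i0, Finset.mem_image_of_mem _ hi0E', Nat.div_eq_of_lt hi0r⟩
    (by
      intro i hi
      have := Finset.mem_range.1 (Finset.mem_filter.1 hi).1
      omega)
    (by simp) (by simp)
    (by
      have := hFG k
      simp only [Finset.card_empty]
      omega)
    (by simp)
    (by
      intro i hi
      have hik := Finset.mem_range.1 (Finset.mem_filter.1 hi).1
      rw [hfilt i hik]
      have e : (GG k).filter (fun j => j ≤ i) = GG (i + 1) := by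
        ext j
        simp only [GG, Finset.mem_filter, Finset.mem_range]
        constructor
        · rintro ⟨⟨_, h2⟩, h3⟩
          exact ⟨by omega, h2⟩
        · rintro ⟨h1, h2⟩
          exact ⟨⟨by omega, h2⟩, by omega⟩
      rw [e]
      have h1 := hFG (i + 1)
      simp only [Finset.card_empty]
      rcases Nat.lt_or_ge (i + 1) k with h2 | h2
      · have := hkmin (i + 1) h2
        omega
      · have : i + 1 = k := by omega
        rw [this] at h1 ⊢
        omega)
    zz
    (by
      intro i hi
      obtain ⟨hik, hiE⟩ := Finset.mem_filter.1 hi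
      rw [Finset.mem_range] at hik
      have hia : i < a := by omega
      have hx' : Matrix.mulVec (starH (gammaMatrix C α)) x = 0 := hx
      have hy' : Matrix.mulVec (starH (gammaMatrix C α)) y = 0 := hy
      have hxi := congrFun hx' ⟨i, hia⟩
      have hyi := congrFun hy' ⟨i, hia⟩
      simp only [Matrix.mulVec, dotProduct, Pi.zero_apply] at hxi hyi
      have hd : ∑ c, starH (gammaMatrix C α) ⟨i, hia⟩ c * (x c - y c) = 0 := by
        simp only [mul_sub, Finset.sum_sub_distrib, hxi, hyi, sub_zero]
      rw [Finset.sum_image hφ.injOn]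
      rw [← Finset.sum_subset (Finset.subset_univ E')] at hd
      · refine Eq.trans (Finset.sum_congr rfl fun c hc => ?_) hd
        rw [hzz]
        congr 1
        have hck := (Finset.mem_filter.1 hc).2
        have hmod : (c : ℕ) % r < r := Nat.mod_lt _ (by omega)
        have hsub : i - (c : ℕ) / r < a := lt_of_le_of_lt (Nat.sub_le _ _) hia
        simp only [starH, Matrix.of_apply, coefR, φ, gammaMatrix, cf, al, hmod, hsub, dif_pos]
        rw [dif_pos (show (c : ℕ) < a * r by omega)]
        split_ifs <;> rfl
      · intro c _ hc
        have hc' : ¬ (c ∈ E ∧ (c : ℕ) < k * r) := fun hh => hc (Finset.mem_filter.2 hh)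
        by_cases hca : (c : ℕ) < a * r
        · by_cases hci : (c : ℕ) / r ≤ i
          · have h1 : (c : ℕ) < k * r := by
              rw [← Nat.div_lt_iff_lt_mul (by omega)]
              omega
            rw [hxy c (Or.inl (by omega)) (fun hh => hc' ⟨hh, h1⟩), sub_self, mul_zero]
          · simp [starH, hca, hci]
        · by_cases hci : (c : ℕ) - a * r = i
          · rw [hxy c (Or.inr (by omega)) (fun hh => hiE ⟨c, hh, by omega⟩), sub_self, mul_zero]
          · simp [starH, hca, hci])
    (by simp)
  have hfin := key (φ i0) (Finset.mem_image_of_mem _ hi0E')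
  rw [hzz] at hfin
  exact sub_eq_zero.1 hfin
end
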